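/- Let n ≥ 3 be odd and let f : ℝⁿ → ℝ be a smooth function whose support is a compact subset of the open unit ball B = {x ∈ ℝⁿ : |x| < 1}. For θ ∈ S^{n-1} let ψ_θ(t) = (M(Δf))(θ,t) be the spherical mean of the Laplacian Δf. Then for every x ∈ B, f(x) = ((−1)^{(n−1)/2} π^{1−n/2} / (4 Γ(n/2))) · ∫_{S^{n-1}} [D^{n-3}(t ↦ t^{n-2} ψ_θ(t))]|_{t=|x−θ|} dθ. -/

import Mathlib

open MeasureTheory Metric

/-- The surface measure on the unit sphere `S^{n-1}` in `ℝⁿ`. -/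
noncomputable def sphereMeasure (n : ℕ) : Measure (sphere (0 : EuclideanSpace ℝ (Fin n)) 1) :=
  (volume : Measure (EuclideanSpace ℝ (Fin n))).toSphere

/-- The operator `D = (1/(2t)) d/dt`. -/
noncomputable def Dop (g : ℝ → ℝ) : ℝ → ℝ := fun t => (1 / (2 * t)) * deriv g t

/-- The Laplacian `Δ f = ∑ ∂²f/∂x_i²` on `ℝⁿ`. -/
noncomputable def lap {n : ℕ} (f : EuclideanSpace ℝ (Fin n) → ℝ)
    (x : EuclideanSpace ℝ (Fin n)) : ℝ :=
  ∑ i : Fin n, iteratedFDeriv ℝ 2 f x ![EuclideanSpace.single i 1, EuclideanSpace.single i 1]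

/-!
In the variable `u = t²` the operator `D` is `d/du`. Replacing the value at `t = |x - θ|` by an
average in `u` against a bump `φ` of width `ε` therefore moves the `n - 3` derivatives onto `φ`, and
polar coordinates around `θ` followed by Fubini turn the backprojection of the spherical means of
`g` into `∫ g(y) K_ε(x, y) dy`, where `K_ε(x, y)` is, up to a constant and a power of `ε`, the
integral of `φ^{(n-3)}((|y - θ|² - |x - θ|²) / ε)` over `θ` in the sphere.

The argument of `φ^{(n-3)}` is affine in `θ`, and by Archimedes' theorem a coordinate `⟨θ, e⟩` has
density proportional to `(1 - s²)^{(n-3)/2}`. For odd `n` this is a polynomial of degree `n - 3`,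
exactly the order of the derivative, so integration by parts leaves a constant: once
`ε ≤ (1 - |x|) |y - x|`, the kernel *equals* a multiple of the Newton kernel `|y - x|^{2-n}`. As
`ε → 0` the backprojection becomes the Newton potential of `g`, and for `g = Δf` that is a multiple
of `f`.
-/

open Set Filter Topology Module InnerProductSpace
open scoped ENNReal Laplacian Gradient

section PolarCoordinates

variable {E : Type*} [NormedAddCommGroup E] [NormedSpace ℝ E] [MeasurableSpace E] [BorelSpace E]
  [FiniteDimensional ℝ E]

theorem measurableEmbedding_smul_sphere :
    MeasurableEmbedding fun p : sphere (0 : E) 1 × Ioi (0 : ℝ) => (p.2 : ℝ) • (p.1 : E) :=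
  (MeasurableEmbedding.subtype_coe (measurableSet_singleton (0 : E)).compl).comp
    (homeomorphUnitSphereProd E).symm.measurableEmbedding

variable [Nontrivial E] (μ : Measure E) [μ.IsAddHaarMeasure]

theorem measurePreserving_smul_sphere :
    MeasurePreserving (fun p : sphere (0 : E) 1 × Ioi (0 : ℝ) => (p.2 : ℝ) • (p.1 : E))
      (μ.toSphere.prod (Measure.volumeIoiPow (finrank ℝ E - 1))) μ := by
  have hval : MeasurePreserving (Subtype.val : ({0}ᶜ : Set E) → E) (μ.comap (↑)) μ := by
    simpa using measurePreserving_subtype_coe (μa := μ) (measurableSet_singleton (0 : E)).compl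
  exact hval.comp (MeasurePreserving.symm (homeomorphUnitSphereProd E).toMeasurableEquiv
    μ.measurePreserving_homeomorphUnitSphereProd)

theorem lintegral_volumeIoiPow (N : ℕ) {g : ℝ → ℝ≥0∞} (hg : Measurable g) :
    ∫⁻ r : Ioi (0 : ℝ), g r ∂Measure.volumeIoiPow N =
      ∫⁻ r in Ioi (0 : ℝ), ENNReal.ofReal (r ^ N) * g r := by
  rw [Measure.volumeIoiPow, lintegral_withDensity_eq_lintegral_mul _ (by fun_prop) (by fun_prop)]
  exact lintegral_subtype_comap measurableSet_Ioi fun r => ENNReal.ofReal (r ^ N) * g r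

theorem lintegral_eq_lintegral_sphere_Ioi {g : E → ℝ≥0∞} (hg : Measurable g) :
    ∫⁻ z, g z ∂μ = ∫⁻ θ : sphere (0 : E) 1, (∫⁻ r in Ioi (0 : ℝ),
      ENNReal.ofReal (r ^ (finrank ℝ E - 1)) * g (r • (θ : E))) ∂μ.toSphere := by
  rw [← (measurePreserving_smul_sphere μ).lintegral_comp hg,
    lintegral_prod
      (fun p : sphere (0 : E) 1 × Ioi (0 : ℝ) => g ((p.2 : ℝ) • (p.1 : E))) (by fun_prop)]
  exact lintegral_congr fun θ =>
    lintegral_volumeIoiPow _ (g := fun r => g (r • (θ : E))) (by fun_prop)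

variable {F : Type*} [NormedAddCommGroup F]

theorem integrable_smul_sphere {g : E → F} (hg : Integrable g μ) :
    Integrable (fun p : sphere (0 : E) 1 × Ioi (0 : ℝ) => g ((p.2 : ℝ) • (p.1 : E)))
      (μ.toSphere.prod (Measure.volumeIoiPow (finrank ℝ E - 1))) :=
  ((measurePreserving_smul_sphere μ).integrable_comp_emb measurableEmbedding_smul_sphere).2 hg

variable [NormedSpace ℝ F]

theorem integral_volumeIoiPow (N : ℕ) (g : ℝ → F) :
    ∫ r : Ioi (0 : ℝ), g r ∂Measure.volumeIoiPow N = ∫ r in Ioi (0 : ℝ), r ^ N • g r := by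
  rw [Measure.volumeIoiPow, integral_withDensity_eq_integral_toReal_smul (by fun_prop) (by simp),
    ← integral_subtype_comap measurableSet_Ioi]
  exact integral_congr_ae (.of_forall fun r => by
    simp only [ENNReal.toReal_ofReal (pow_nonneg (mem_Ioi.1 r.2).le N)])

theorem integral_eq_integral_sphere_Ioi {g : E → F} (hg : Integrable g μ) :
    ∫ z, g z ∂μ = ∫ θ : sphere (0 : E) 1, (∫ r in Ioi (0 : ℝ),
      r ^ (finrank ℝ E - 1) • g (r • (θ : E))) ∂μ.toSphere := by
  rw [← (measurePreserving_smul_sphere μ).integral_comp measurableEmbedding_smul_sphere,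
    integral_prod _ (integrable_smul_sphere μ hg)]
  exact integral_congr_ae (.of_forall fun θ => integral_volumeIoiPow _ fun r => g (r • (θ : E)))

theorem integral_eq_integral_Ioi_sphere {g : E → F} (hg : Integrable g μ) :
    ∫ z, g z ∂μ = ∫ r in Ioi (0 : ℝ),
      r ^ (finrank ℝ E - 1) • ∫ θ : sphere (0 : E) 1, g (r • (θ : E)) ∂μ.toSphere := by
  rw [← (measurePreserving_smul_sphere μ).integral_comp measurableEmbedding_smul_sphere,
    integral_prod_symm _ (integrable_smul_sphere μ hg)]
  exact integral_volumeIoiPow _ fun r => ∫ θ : sphere (0 : E) 1, g (r • (θ : E)) ∂μ.toSphere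

end PolarCoordinates

/-- The area `2 π^{d/2} / Γ(d/2)` of the unit sphere of a `d`-dimensional Euclidean space. -/
noncomputable def sphereArea (d : ℕ) : ℝ :=
  2 * Real.pi ^ ((d : ℝ) / 2) / Real.Gamma ((d : ℝ) / 2)

theorem sphereArea_pos {d : ℕ} (hd : d ≠ 0) : 0 < sphereArea d := by
  have : 0 < (d : ℝ) / 2 := by positivity
  have := Real.Gamma_pos_of_pos this
  unfold sphereArea
  positivity

section FunkHecke

theorem lintegral_upperHalfPlane_polar {G : ℝ × ℝ → ℝ≥0∞} (hG : Measurable G) :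
    ∫⁻ t : ℝ, ∫⁻ q in Ioi (0 : ℝ), G (t, q) =
      ∫⁻ r in Ioi (0 : ℝ), ∫⁻ α in Ioo 0 Real.pi,
        ENNReal.ofReal r * G (r * Real.cos α, r * Real.sin α) := by
  have hhalf : MeasurableSet {p : ℝ × ℝ | 0 < p.2} :=
    measurableSet_lt measurable_const measurable_snd
  set G₀ : ℝ × ℝ → ℝ≥0∞ := {p : ℝ × ℝ | 0 < p.2}.indicator G
  have hG₀ : Measurable G₀ := hG.indicator hhalf
  have hsin : ∀ r ∈ Ioi (0 : ℝ), ∀ α ∈ Ioo (-Real.pi) Real.pi,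
      ENNReal.ofReal r * G₀ (r * Real.cos α, r * Real.sin α) = (Ioo 0 Real.pi).indicator
        (fun α => ENNReal.ofReal r * G (r * Real.cos α, r * Real.sin α)) α := by
    intro r hr α hα
    have hiff : 0 < r * Real.sin α ↔ α ∈ Ioo 0 Real.pi := by
      rw [mul_pos_iff_of_pos_left hr]
      refine ⟨fun h => ⟨?_, hα.2⟩, Real.sin_pos_of_mem_Ioo⟩
      by_contra! hα0
      exact (Real.sin_nonpos_of_nonpos_of_neg_pi_le hα0 hα.1.le).not_gt h
    by_cases h : α ∈ Ioo 0 Real.pi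
    · simp [G₀, h, hiff.2 h]
    · simp [G₀, h, mt hiff.1 h]
  calc ∫⁻ t : ℝ, ∫⁻ q in Ioi (0 : ℝ), G (t, q) = ∫⁻ p, G₀ p := by
        rw [Measure.volume_eq_prod, lintegral_prod _ hG₀.aemeasurable]
        exact lintegral_congr fun t => (lintegral_indicator measurableSet_Ioi _).symm
    _ = ∫⁻ r in Ioi (0 : ℝ), ∫⁻ α in Ioo (-Real.pi) Real.pi,
          ENNReal.ofReal r * G₀ (r * Real.cos α, r * Real.sin α) := by
        rw [← lintegral_comp_polarCoord_symm, polarCoord_target, Measure.volume_eq_prod,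
          setLIntegral_prod _ (by simp only [polarCoord_symm_apply]; fun_prop)]
        rfl
    _ = _ := by
        refine setLIntegral_congr_fun measurableSet_Ioi fun r hr => ?_
        rw [setLIntegral_congr_fun measurableSet_Ioo (hsin r hr),
          setLIntegral_indicator measurableSet_Ioo, inter_eq_left.2]
        exact Ioo_subset_Ioo_left (by linarith [Real.pi_pos])

theorem image_cos_Ioo : Real.cos '' Ioo 0 Real.pi = Ioo (-1) 1 := by
  have hanti := Real.strictAntiOn_cos
  refine Subset.antisymm ?_ fun s hs => ?_
  · rintro _ ⟨α, hα, rfl⟩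
    have hαI := Ioo_subset_Icc_self hα
    exact ⟨Real.cos_pi ▸ hanti hαI (right_mem_Icc.2 Real.pi_pos.le) hα.2,
      Real.cos_zero ▸ hanti (left_mem_Icc.2 Real.pi_pos.le) hαI hα.1⟩
  · refine ⟨Real.arccos s, ⟨Real.arccos_pos.2 hs.2, ?_⟩, Real.cos_arccos hs.1.le hs.2.le⟩
    exact (Real.arccos_le_pi s).lt_of_ne (mt Real.arccos_eq_pi.1 hs.1.not_ge)

theorem lintegral_comp_cos {k : ℕ} {F : ℝ → ℝ≥0∞} :
    ∫⁻ α in Ioo 0 Real.pi, ENNReal.ofReal (Real.sin α ^ k) * F (Real.cos α) =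
      ∫⁻ s in Ioo (-1 : ℝ) 1, ENNReal.ofReal ((1 - s ^ 2) ^ (((k : ℝ) - 1) / 2)) * F s := by
  rw [← image_cos_Ioo, lintegral_image_eq_lintegral_abs_deriv_mul measurableSet_Ioo
    (fun α _ => (Real.hasDerivAt_cos α).hasDerivWithinAt)
    (Real.injOn_cos.mono Ioo_subset_Icc_self)]
  refine setLIntegral_congr_fun measurableSet_Ioo fun α hα => ?_
  have hsin : 0 < Real.sin α := Real.sin_pos_of_mem_Ioo hα
  have hpow : Real.sin α * (1 - Real.cos α ^ 2) ^ (((k : ℝ) - 1) / 2) = Real.sin α ^ k := by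
    rw [← Real.sin_sq, ← Real.rpow_natCast_mul hsin.le, Nat.cast_ofNat,
      mul_div_cancel₀ _ two_ne_zero, Real.rpow_sub_one hsin.ne', Real.rpow_natCast,
      mul_div_cancel₀ _ hsin.ne']
  rw [← mul_assoc, ← ENNReal.ofReal_mul (abs_nonneg _), abs_neg, abs_of_pos hsin, hpow]

variable {E : Type*} [NormedAddCommGroup E] [InnerProductSpace ℝ E]

theorem inner_smul_add_orthogonal {e : E} (he : ‖e‖ = 1) (t : ℝ) (w : (ℝ ∙ e)ᗮ) :
    inner ℝ (t • e + (w : E)) e = t := by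
  have hw : inner ℝ (w : E) e = 0 := by
    simpa [real_inner_comm] using Submodule.mem_orthogonal_singleton_iff_inner_right.1 w.2
  simp [inner_add_left, real_inner_smul_left, he, hw]

theorem norm_smul_add_orthogonal {e : E} (he : ‖e‖ = 1) (t : ℝ) (w : (ℝ ∙ e)ᗮ) :
    ‖t • e + (w : E)‖ = √(t ^ 2 + ‖w‖ ^ 2) := by
  have hw : inner ℝ (t • e) (w : E) = 0 := by
    simp [real_inner_smul_left, Submodule.mem_orthogonal_singleton_iff_inner_right.1 w.2]
  rw [eq_comm, Real.sqrt_eq_iff_mul_self_eq (by positivity) (norm_nonneg _),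
    norm_add_mul_self_real, hw, norm_smul, he]
  simp [sq]

variable [FiniteDimensional ℝ E]

theorem finrank_orthogonal_span_unit {e : E} (he : ‖e‖ = 1) :
    finrank ℝ (ℝ ∙ e)ᗮ + 1 = finrank ℝ E := by
  have he0 : e ≠ 0 := norm_ne_zero_iff.1 (by simp [he])
  rw [← (ℝ ∙ e).finrank_add_finrank_orthogonal, finrank_span_singleton he0, add_comm]

variable [MeasurableSpace E] [BorelSpace E]

theorem toSphere_real_univ_eq_sphereArea [Nontrivial E] :
    (volume : Measure E).toSphere.real univ = sphereArea (finrank ℝ E) := by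
  have hpos : 0 < finrank ℝ E := finrank_pos
  have hd : 0 < (finrank ℝ E : ℝ) / 2 := by positivity
  rw [Measure.toSphere_real_apply_univ, Measure.real, InnerProductSpace.volume_ball,
    Real.Gamma_add_one hd.ne', Real.sqrt_eq_rpow, ← Real.rpow_mul_natCast Real.pi_pos.le]
  simp only [ENNReal.ofReal_one, one_pow, one_mul, sphereArea, one_div_mul_eq_div]
  rw [ENNReal.toReal_ofReal (div_nonneg (by positivity)
    (mul_nonneg hd.le (Real.Gamma_pos_of_pos hd).le))]
  field_simp

theorem toSphere_univ_eq_sphereArea [Nontrivial E] :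
    (volume : Measure E).toSphere univ = ENNReal.ofReal (sphereArea (finrank ℝ E)) := by
  rw [← toSphere_real_univ_eq_sphereArea, ofReal_measureReal]

theorem lintegral_comp_norm [Nontrivial E] {g : ℝ → ℝ≥0∞} (hg : Measurable g) :
    ∫⁻ z : E, g ‖z‖ = ENNReal.ofReal (sphereArea (finrank ℝ E)) *
      ∫⁻ r in Ioi (0 : ℝ), ENNReal.ofReal (r ^ (finrank ℝ E - 1)) * g r := by
  rw [lintegral_eq_lintegral_sphere_Ioi _ (by fun_prop), ← toSphere_univ_eq_sphereArea, mul_comm,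
    ← lintegral_const]
  refine lintegral_congr fun θ => setLIntegral_congr_fun measurableSet_Ioi fun r hr => ?_
  simp [norm_smul, abs_of_pos (mem_Ioi.1 hr)]

theorem measurePreserving_smul_add_orthogonal {e : E} (he : ‖e‖ = 1) :
    MeasurePreserving fun p : ℝ × (ℝ ∙ e)ᗮ => p.1 • e + (p.2 : E) := by
  have hspan := (LinearIsometryEquiv.toSpanUnitSingleton e he).measurePreserving
  have hE := (ℝ ∙ e).orthogonalDecomposition.symm.measurePreserving
  exact hE.comp ((WithLp.volume_preserving_toLp _ _).comp
    (hspan.prod (MeasurePreserving.id volume)))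

theorem lintegral_inner_norm {k : ℕ} (hk : finrank ℝ E = k + 2) {e : E} (he : ‖e‖ = 1)
    {H : ℝ → ℝ → ℝ≥0∞} (hH : Measurable H.uncurry) :
    ∫⁻ z : E, H (inner ℝ z e) ‖z‖ = ENNReal.ofReal (sphereArea (k + 1)) *
      ∫⁻ r in Ioi (0 : ℝ), ∫⁻ α in Ioo 0 Real.pi,
        ENNReal.ofReal r * (ENNReal.ofReal ((r * Real.sin α) ^ k) * H (r * Real.cos α) r) := by
  have hrank : finrank ℝ (ℝ ∙ e)ᗮ = k + 1 := by
    have := finrank_orthogonal_span_unit he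
    lia
  have : Nontrivial (ℝ ∙ e)ᗮ := nontrivial_of_finrank_pos (R := ℝ) (by lia)
  calc ∫⁻ z : E, H (inner ℝ z e) ‖z‖
      = ∫⁻ p : ℝ × (ℝ ∙ e)ᗮ, H p.1 √(p.1 ^ 2 + ‖p.2‖ ^ 2) := by
        rw [← (measurePreserving_smul_add_orthogonal he).lintegral_comp (by fun_prop)]
        simp only [inner_smul_add_orthogonal he, norm_smul_add_orthogonal he]
    _ = ∫⁻ t : ℝ, ∫⁻ w : (ℝ ∙ e)ᗮ, H t √(t ^ 2 + ‖w‖ ^ 2) := by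
        rw [Measure.volume_eq_prod,
          lintegral_prod (fun p => H p.1 √(p.1 ^ 2 + ‖p.2‖ ^ 2)) (by fun_prop)]
    _ = ∫⁻ t : ℝ, ENNReal.ofReal (sphereArea (k + 1)) *
          ∫⁻ q in Ioi (0 : ℝ), ENNReal.ofReal (q ^ k) * H t √(t ^ 2 + q ^ 2) := by
        refine lintegral_congr fun t => ?_
        rw [lintegral_comp_norm (g := fun q => H t √(t ^ 2 + q ^ 2)) (by fun_prop), hrank,
          Nat.add_sub_cancel]
    _ = ENNReal.ofReal (sphereArea (k + 1)) * ∫⁻ t : ℝ,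
          ∫⁻ q in Ioi (0 : ℝ), ENNReal.ofReal (q ^ k) * H t √(t ^ 2 + q ^ 2) :=
        lintegral_const_mul' _ _ ENNReal.ofReal_ne_top
    _ = _ := by
        congr 1
        rw [lintegral_upperHalfPlane_polar
          (G := fun p => ENNReal.ofReal (p.2 ^ k) * H p.1 √(p.1 ^ 2 + p.2 ^ 2)) (by fun_prop)]
        refine setLIntegral_congr_fun measurableSet_Ioi fun r hr => ?_
        simp only [mul_pow, ← mul_add, Real.cos_sq_add_sin_sq, mul_one,
          Real.sqrt_sq (mem_Ioi.1 hr).le]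

theorem lintegral_inner_div_norm_mul [Nontrivial E] {e : E} {F c : ℝ → ℝ≥0∞} (hF : Measurable F)
    (hc : Measurable c) :
    ∫⁻ z : E, F (inner ℝ z e / ‖z‖) * c ‖z‖ =
      (∫⁻ r in Ioi (0 : ℝ), ENNReal.ofReal (r ^ (finrank ℝ E - 1)) * c r) *
        ∫⁻ θ : sphere (0 : E) 1, F (inner ℝ (θ : E) e) ∂volume.toSphere := by
  rw [lintegral_eq_lintegral_sphere_Ioi _ (by fun_prop), ← lintegral_const_mul _ (by fun_prop)]
  refine lintegral_congr fun θ => ?_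
  rw [← lintegral_mul_const _ (by fun_prop)]
  refine setLIntegral_congr_fun measurableSet_Ioi fun r hr => ?_
  have hr : 0 < r := hr
  simp [norm_smul, abs_of_pos hr, real_inner_smul_left, hr.ne', mul_assoc, mul_comm,
    mul_left_comm]

theorem lintegral_inner_div_norm_mul_eq_lintegral_cos {k : ℕ} (hk : finrank ℝ E = k + 2) {e : E}
    (he : ‖e‖ = 1) {F c : ℝ → ℝ≥0∞} (hF : Measurable F) (hc : Measurable c) :
    ∫⁻ z : E, F (inner ℝ z e / ‖z‖) * c ‖z‖ =
      (∫⁻ r in Ioi (0 : ℝ), ENNReal.ofReal (r ^ (k + 1)) * c r) *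
        (ENNReal.ofReal (sphereArea (k + 1)) *
          ∫⁻ α in Ioo 0 Real.pi, ENNReal.ofReal (Real.sin α ^ k) * F (Real.cos α)) := by
  rw [lintegral_inner_norm hk he (H := fun t r => F (t / r) * c r) (by fun_prop), mul_left_comm,
    ← lintegral_mul_const _ (by fun_prop)]
  congr 1
  refine setLIntegral_congr_fun measurableSet_Ioi fun r hr => ?_
  have hr : 0 < r := hr
  rw [← lintegral_const_mul _ (by fun_prop)]
  refine lintegral_congr fun α => ?_
  rw [mul_div_cancel_left₀ _ hr.ne', mul_pow, ENNReal.ofReal_mul (by positivity), pow_succ,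
    ENNReal.ofReal_mul (by positivity)]
  ring

theorem lintegral_sphere_inner (hE : 2 ≤ finrank ℝ E) {e : E} (he : ‖e‖ = 1)
    {F : ℝ → ℝ≥0∞} (hF : Measurable F) :
    ∫⁻ θ : sphere (0 : E) 1, F (inner ℝ (θ : E) e) ∂volume.toSphere =
      ENNReal.ofReal (sphereArea (finrank ℝ E - 1)) * ∫⁻ s in Ioo (-1 : ℝ) 1,
        ENNReal.ofReal ((1 - s ^ 2) ^ (((finrank ℝ E : ℝ) - 3) / 2)) * F s := by
  obtain ⟨k, hk⟩ := Nat.exists_eq_add_of_le' hE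
  have : Nontrivial E := nontrivial_of_finrank_pos (R := ℝ) (by lia)
  have hd : finrank ℝ E - 1 = k + 1 := by lia
  -- The radial factor of the indicator of the unit ball is positive and finite, so it cancels.
  set c : ℝ → ℝ≥0∞ := (Iio 1).indicator 1 with hc
  have hcm : Measurable c := measurable_one.indicator measurableSet_Iio
  set A : ℝ≥0∞ := ∫⁻ r in Ioi (0 : ℝ), ENNReal.ofReal (r ^ (k + 1)) * c r with hA
  have hball : ENNReal.ofReal (sphereArea (finrank ℝ E)) * A = volume (ball (0 : E) 1) := by
    rw [hA, ← hd, ← lintegral_comp_norm hcm, ← lintegral_indicator_one measurableSet_ball]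
    exact lintegral_congr fun z => by simp [hc, indicator]
  have hA0 : A ≠ 0 := right_ne_zero_of_mul (hball ▸ (measure_ball_pos _ _ one_pos).ne')
  have hAtop : A ≠ ⊤ := fun h => measure_ball_lt_top.ne (hball.symm.trans (by
    simp [h, ENNReal.mul_top, sphereArea_pos finrank_pos.ne']))
  have hpolar := lintegral_inner_div_norm_mul (e := e) hF hcm
  rw [hd, lintegral_inner_div_norm_mul_eq_lintegral_cos hk he hF hcm, ← hA,
    (ENNReal.mul_right_strictMono hA0 hAtop).injective.eq_iff, lintegral_comp_cos] at hpolar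
  rw [← hpolar, hd, hk, show ((k + 2 : ℕ) : ℝ) - 3 = k - 1 by push_cast; ring]

theorem map_inner_toSphere (hE : 2 ≤ finrank ℝ E) {e : E} (he : ‖e‖ = 1) :
    (volume : Measure E).toSphere.map (fun θ : sphere (0 : E) 1 => inner ℝ (θ : E) e) =
      ENNReal.ofReal (sphereArea (finrank ℝ E - 1)) •
        (volume.restrict (Ioo (-1 : ℝ) 1)).withDensity
          fun s => ENNReal.ofReal ((1 - s ^ 2) ^ (((finrank ℝ E : ℝ) - 3) / 2)) := by
  refine Measure.ext_of_lintegral _ fun F hF => ?_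
  rw [lintegral_map hF (by fun_prop), lintegral_sphere_inner hE he hF, lintegral_smul_measure,
    lintegral_withDensity_eq_lintegral_mul _ (by fun_prop) hF]
  rfl

theorem integral_sphere_inner {G : Type*} [NormedAddCommGroup G] [NormedSpace ℝ G]
    (hE : 2 ≤ finrank ℝ E) {e : E} (he : ‖e‖ = 1) {F : ℝ → G} (hF : StronglyMeasurable F) :
    ∫ θ : sphere (0 : E) 1, F (inner ℝ (θ : E) e) ∂volume.toSphere =
      sphereArea (finrank ℝ E - 1) • ∫ s in Ioo (-1 : ℝ) 1,
        (1 - s ^ 2) ^ (((finrank ℝ E : ℝ) - 3) / 2) • F s := by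
  rw [← integral_map (φ := fun θ : sphere (0 : E) 1 => inner ℝ (θ : E) e) (by fun_prop)
    hF.aestronglyMeasurable, map_inner_toSphere hE he, integral_smul_measure,
    ENNReal.toReal_ofReal (sphereArea_pos (by lia)).le,
    integral_withDensity_eq_integral_toReal_smul (by fun_prop) (by simp)]
  congr 1
  refine setIntegral_congr_fun measurableSet_Ioo fun s hs => ?_
  have : 0 ≤ 1 - s ^ 2 := by nlinarith [hs.1, hs.2]
  simp only [ENNReal.toReal_ofReal (Real.rpow_nonneg this _)]

end FunkHecke

section IteratedIntegrationByParts

theorem hasDerivAt_iteratedDeriv {φ : ℝ → ℝ} {n k : ℕ} (hφ : ContDiff ℝ n φ) (hk : k < n) (u : ℝ) :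
    HasDerivAt (iteratedDeriv k φ) (iteratedDeriv (k + 1) φ u) u := by
  rw [iteratedDeriv_succ]
  exact ((hφ.differentiable_iteratedDeriv k (mod_cast hk)) u).hasDerivAt

theorem support_iteratedDeriv_subset {φ : ℝ → ℝ} (k : ℕ) :
    Function.support (iteratedDeriv k φ) ⊆ tsupport φ := by
  refine fun u hu => support_iteratedFDeriv_subset (𝕜 := ℝ) k ?_
  rwa [Function.mem_support, ← norm_ne_zero_iff, norm_iteratedFDeriv_eq_norm_iteratedDeriv,
    norm_ne_zero_iff]

theorem integrable_mul_iteratedDeriv {φ g : ℝ → ℝ} {k : ℕ} {U : Set ℝ} (hφ : ContDiff ℝ k φ)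
    (hφc : HasCompactSupport φ) (hU : IsOpen U) (hφU : tsupport φ ⊆ U) (hg : ContinuousOn g U) :
    Integrable fun u => g u * iteratedDeriv k φ u := by
  have hsupp : tsupport (iteratedDeriv k φ) ⊆ tsupport φ :=
    closure_minimal (support_iteratedDeriv_subset k) (isClosed_tsupport φ)
  have hcont : ContinuousOn (fun u => g u * iteratedDeriv k φ u) U :=
    hg.mul (hφ.continuous_iteratedDeriv' k).continuousOn
  have hcpt : HasCompactSupport (iteratedDeriv k φ) := hφc.of_isClosed_subset isClosed_closure hsupp
  have hprod := hcont.continuous_of_tsupport_subset hU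
    (tsupport_mul_subset_right.trans (hsupp.trans hφU))
  exact hprod.integrable_of_hasCompactSupport hcpt.mul_left

theorem integral_mul_iteratedDeriv {φ : ℝ → ℝ} {k : ℕ} {U : Set ℝ} (hφ : ContDiff ℝ k φ)
    (hφc : HasCompactSupport φ) (hU : IsOpen U) (hφU : tsupport φ ⊆ U) {G : ℕ → ℝ → ℝ}
    (hG : ∀ j < k, ∀ u ∈ U, HasDerivAt (G j) (G (j + 1) u) u) (hGk : ContinuousOn (G k) U) :
    ∫ u, G 0 u * iteratedDeriv k φ u = (-1) ^ k * ∫ u, G k u * φ u := by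
  induction k generalizing G with
  | zero => simp
  | succ k ih =>
    have hφk : ContDiff ℝ k φ := hφ.of_le (mod_cast k.le_succ)
    have hGcont : ∀ j ≤ k + 1, ContinuousOn (G j) U := fun j hj =>
      hj.eq_or_lt.elim (fun h => h ▸ hGk) fun hlt u hu =>
        (hG j hlt u hu).continuousAt.continuousWithinAt
    have hderiv : ∀ u, HasDerivAt (fun u => G 0 u * iteratedDeriv k φ u)
        (G 1 u * iteratedDeriv k φ u + G 0 u * iteratedDeriv (k + 1) φ u) u := by
      intro u
      by_cases hu : u ∈ tsupport φ
      · exact (hG 0 k.succ_pos u (hφU hu)).mul (hasDerivAt_iteratedDeriv hφ k.lt_succ_self u)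
      · have hzero : ∀ j, ∀ᶠ u' in 𝓝 u, iteratedDeriv j φ u' = 0 := fun j =>
          ((isClosed_tsupport φ).isOpen_compl.eventually_mem hu).mono fun u' hu' =>
            Function.notMem_support.1 fun h => hu' (support_iteratedDeriv_subset j h)
        rw [(hzero k).self_of_nhds, (hzero (k + 1)).self_of_nhds, mul_zero, mul_zero, add_zero]
        exact (hasDerivAt_const u (0 : ℝ)).congr_of_eventuallyEq
          ((hzero k).mono fun u' hu' => by simp only [hu', mul_zero])
    have hint₁ := integrable_mul_iteratedDeriv hφk hφc hU hφU (hGcont 1 (by lia))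
    have hint₀ := integrable_mul_iteratedDeriv hφ hφc hU hφU (hGcont 0 (by lia))
    have hsum := integral_eq_zero_of_hasDerivAt_of_integrable hderiv (hint₁.add hint₀)
      (integrable_mul_iteratedDeriv hφk hφc hU hφU (hGcont 0 (by lia)))
    rw [integral_add hint₁ hint₀] at hsum
    rw [eq_neg_of_add_eq_zero_right hsum,
      ih (G := fun j => G (j + 1)) hφk (fun j hj => hG (j + 1) (by lia)) hGk, pow_succ]
    ring

end IteratedIntegrationByParts

section SphericalKernel

open Polynomial in
theorem iterate_derivative_eq_C_of_natDegree_le {R : Type*} [Semiring R] {p : R[X]} {n : ℕ}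
    (hp : p.natDegree ≤ n) : derivative^[n] p = C (n.factorial • p.coeff n) := by
  rw [eq_C_of_natDegree_le_zero ((natDegree_iterate_derivative p n).trans (by lia)),
    coeff_iterate_derivative, zero_add, Nat.descFactorial_self]

variable {E : Type*} [NormedAddCommGroup E] [InnerProductSpace ℝ E] [FiniteDimensional ℝ E]
  [MeasurableSpace E] [BorelSpace E] {φ : ℝ → ℝ} {m : ℕ}

open Polynomial in
theorem integral_one_sub_sq_pow_mul_iteratedDeriv (hφ : ContDiff ℝ (2 * m : ℕ) φ)
    (hφc : HasCompactSupport φ) (c l : ℝ) :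
    ∫ u, (1 - ((u - c) / l) ^ 2) ^ m * iteratedDeriv (2 * m) φ u =
      (-1) ^ m * (2 * m).factorial / l ^ (2 * m) * ∫ u, φ u := by
  set p : ℝ[X] := C (-(1 / l) ^ 2) * X ^ 2 + C (2 * c / l ^ 2) * X + C (1 - (c / l) ^ 2)
  have heval : ∀ u, (p ^ m).eval u = (1 - ((u - c) / l) ^ 2) ^ m := fun u => by
    simp only [p, eval_add, eval_mul, eval_C, eval_pow, eval_X]
    ring
  have hdeg : (p ^ m).natDegree ≤ 2 * m :=
    (natDegree_pow_le_of_le m natDegree_quadratic_le).trans_eq (mul_comm m 2)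
  have hcoeff : p.coeff 2 = -(1 / l) ^ 2 := by
    simp only [p, coeff_add, coeff_C_mul, coeff_X_pow, coeff_X, coeff_C]
    norm_num
  have hlead : (p ^ m).coeff (2 * m) = (-1) ^ m / l ^ (2 * m) := by
    rw [mul_comm 2 m, coeff_pow_of_natDegree_le natDegree_quadratic_le, hcoeff, neg_pow, ← pow_mul,
      one_div_pow, mul_one_div, mul_comm m 2]
  have hibp := integral_mul_iteratedDeriv hφ hφc isOpen_univ (subset_univ _)
    (G := fun j u => (derivative^[j] (p ^ m)).eval u)
    (fun j _ u _ => by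
      rw [Function.iterate_succ_apply']
      exact Polynomial.hasDerivAt _ u)
    (Polynomial.continuousOn _)
  simp only [Function.iterate_zero, id, heval, iterate_derivative_eq_C_of_natDegree_le hdeg, hlead,
    eval_C, integral_const_mul] at hibp
  rw [hibp, pow_mul, neg_one_sq, one_pow, one_mul, nsmul_eq_mul]
  ring

theorem integral_sphere_iteratedDeriv_add_inner (hE : finrank ℝ E = 2 * m + 3)
    (hφ : ContDiff ℝ (2 * m : ℕ) φ) (hφ₁ : tsupport φ ⊆ Icc (-1) 1) {b : ℝ} {v : E}
    (hbv : |b| + 1 ≤ ‖v‖) :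
    ∫ θ : sphere (0 : E) 1, iteratedDeriv (2 * m) φ (b + inner ℝ (θ : E) v) ∂volume.toSphere =
      sphereArea (2 * m + 2) * ((-1) ^ m * (2 * m).factorial / ‖v‖ ^ (2 * m + 1)) * ∫ u, φ u := by
  have hv : 0 < ‖v‖ := by linarith [abs_nonneg b]
  have hφc : HasCompactSupport φ := isCompact_Icc.of_isClosed_subset (isClosed_tsupport φ) hφ₁
  have hunit : ‖‖v‖⁻¹ • v‖ = 1 := norm_smul_inv_norm (𝕜 := ℝ) (norm_pos_iff.1 hv)
  have hrescale : ∀ θ : sphere (0 : E) 1,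
      inner ℝ (θ : E) v = ‖v‖ * inner ℝ (θ : E) (‖v‖⁻¹ • v) := fun θ => by
    rw [inner_smul_right, mul_inv_cancel_left₀ hv.ne']
  have hweight : ((finrank ℝ E : ℝ) - 3) / 2 = m := by
    rw [hE]
    push_cast
    ring
  set ρ : ℝ → ℝ := fun u => (1 - ((u - b) / ‖v‖) ^ 2) ^ m * iteratedDeriv (2 * m) φ u with hρ
  have hρ_rescale : ∀ s : ℝ,
      (1 - s ^ 2) ^ m * iteratedDeriv (2 * m) φ (b + ‖v‖ * s) = ρ (b + ‖v‖ * s) := fun s => by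
    simp only [hρ, add_sub_cancel_left, mul_div_cancel_left₀ _ hv.ne']
  have hρ_zero : ∀ s ∉ Icc (-1 : ℝ) 1, ρ (b + ‖v‖ * s) = 0 := by
    refine fun s hs => mul_eq_zero_of_right _ (Function.notMem_support.1 fun h => hs ?_)
    have hmem := hφ₁ (support_iteratedDeriv_subset _ h)
    exact ⟨le_of_mul_le_mul_left (by linarith [le_abs_self b, hmem.1]) hv,
      le_of_mul_le_mul_left (by linarith [neg_abs_le b, hmem.2]) hv⟩
  simp_rw [hrescale]
  rw [integral_sphere_inner (F := fun s => iteratedDeriv (2 * m) φ (b + ‖v‖ * s)) (by lia) hunit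
    ((hφ.continuous_iteratedDeriv' _).comp (by fun_prop)).stronglyMeasurable, hweight, hE]
  simp only [Real.rpow_natCast, smul_eq_mul, hρ_rescale]
  rw [← integral_Icc_eq_integral_Ioo, setIntegral_eq_integral_of_forall_compl_eq_zero hρ_zero,
    Measure.integral_comp_mul_left (fun u => ρ (b + u)), integral_add_left_eq_self ρ,
    integral_one_sub_sq_pow_mul_iteratedDeriv hφ hφc, abs_of_pos (inv_pos.2 hv), smul_eq_mul,
    pow_succ]
  field_simp
  exact mul_comm _ _

end SphericalKernel

section Laplacian

variable {E : Type*} [NormedAddCommGroup E] [InnerProductSpace ℝ E] [FiniteDimensional ℝ E]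

theorem laplacian_eq_sum_fderiv_fderiv {ι : Type*} [Fintype ι] (b : OrthonormalBasis ι ℝ E)
    {f : E → ℝ} (hf : ContDiff ℝ 2 f) (y : E) :
    Δ f y = ∑ i, fderiv ℝ (fun z => fderiv ℝ f z (b i)) y (b i) := by
  have hdiff : DifferentiableAt ℝ (fderiv ℝ f) y :=
    (hf.fderiv_right le_rfl).differentiable one_ne_zero y
  rw [laplacian_eq_iteratedFDeriv_orthonormalBasis f b]
  refine Finset.sum_congr rfl fun i _ => ?_
  rw [iteratedFDeriv_two_apply, fderiv_clm_apply hdiff (differentiableAt_const _)]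
  simp

theorem contDiff_laplacian {f : E → ℝ} {n : ℕ} (hf : ContDiff ℝ (n + 2 : ℕ) f) :
    ContDiff ℝ n (Δ f) := by
  have h2 : ContDiff ℝ n (iteratedFDeriv ℝ 2 f) := hf.iteratedFDeriv_right (by norm_cast)
  rw [laplacian_eq_iteratedFDeriv_stdOrthonormalBasis]
  exact ContDiff.sum fun i _ =>
    (ContinuousMultilinearMap.apply ℝ (fun _ : Fin 2 => E) ℝ _).contDiff.comp h2

theorem support_laplacian_subset (f : E → ℝ) : Function.support (Δ f) ⊆ tsupport f := by
  refine fun y hy => support_iteratedFDeriv_subset (𝕜 := ℝ) 2 fun h => hy ?_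
  simp [laplacian_eq_iteratedFDeriv_stdOrthonormalBasis, h]

variable [MeasurableSpace E] [BorelSpace E]

theorem integral_mul_laplacian {u f : E → ℝ} (hu : ContDiff ℝ 1 u) (hf : ContDiff ℝ 2 f)
    (hfc : HasCompactSupport f) :
    ∫ y, u y * Δ f y = -∫ y, inner ℝ (∇ u y) (∇ f y) := by
  set b := stdOrthonormalBasis ℝ E
  set g := fun i y => fderiv ℝ f y (b i)
  have hg : ∀ i, ContDiff ℝ 1 (g i) := fun i => (hf.fderiv_right le_rfl).clm_apply contDiff_const
  have hgc : ∀ i, HasCompactSupport (g i) := fun i => hfc.fderiv_apply (𝕜 := ℝ) (b i)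
  have hu' : ∀ i, Continuous fun y => fderiv ℝ u y (b i) := fun i =>
    (hu.continuous_fderiv one_ne_zero).clm_apply continuous_const
  have hgc' : ∀ i, HasCompactSupport fun y => fderiv ℝ (g i) y (b i) := fun i =>
    (hgc i).fderiv_apply (𝕜 := ℝ) (b i)
  have hg' : ∀ i, Continuous fun y => fderiv ℝ (g i) y (b i) := fun i =>
    ((hg i).continuous_fderiv one_ne_zero).clm_apply continuous_const
  have hint : ∀ i, Integrable fun y => u y * fderiv ℝ (g i) y (b i) := fun i =>
    (hu.continuous.mul (hg' i)).integrable_of_hasCompactSupport (hgc' i).mul_left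
  have hint' : ∀ i, Integrable fun y => fderiv ℝ u y (b i) * g i y := fun i =>
    ((hu' i).mul (hg i).continuous).integrable_of_hasCompactSupport (hgc i).mul_left
  have hparts : ∀ i, ∫ y, u y * fderiv ℝ (g i) y (b i) = -∫ y, fderiv ℝ u y (b i) * g i y :=
    fun i => integral_mul_fderiv_eq_neg_fderiv_mul_of_integrable (hint' i) (hint i)
      ((hu.continuous.mul (hg i).continuous).integrable_of_hasCompactSupport (hgc i).mul_left)
      (fun y _ => hu.differentiable one_ne_zero y) (fun y _ => (hg i).differentiable one_ne_zero y)
  have hinner : ∀ y, inner ℝ (∇ u y) (∇ f y) = ∑ i, fderiv ℝ u y (b i) * g i y := fun y => by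
    rw [← b.sum_inner_mul_inner]
    simp only [inner_gradient_left, inner_gradient_right, g, conj_trivial]
  simp_rw [laplacian_eq_sum_fderiv_fderiv b hf, Finset.mul_sum, hinner]
  rw [integral_finsetSum _ fun i _ => hint i, integral_finsetSum _ fun i _ => hint' i,
    ← Finset.sum_neg_distrib]
  exact Finset.sum_congr rfl fun i _ => hparts i

end Laplacian

section NewtonPotential

theorem sq_rpow_neg_half {r : ℝ} (hr : 0 ≤ r) (b : ℕ) : (r ^ 2) ^ (-(b / 2 : ℝ)) = (r ^ b)⁻¹ := by
  rw [← Real.rpow_natCast_mul hr, Nat.cast_ofNat, mul_neg, mul_div_cancel₀ _ two_ne_zero,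
    Real.rpow_neg hr, Real.rpow_natCast]

theorem tendsto_integral_rpow_norm_sub_sq_add_mul {E : Type*} [NormedAddCommGroup E]
    [MeasurableSpace E] [BorelSpace E] {μ : Measure E} [NullSingletonClass μ] {b : ℕ} {x : E}
    {g : E → ℝ} (hg : AEStronglyMeasurable g μ)
    (hint : Integrable (fun y => (‖y - x‖ ^ b)⁻¹ * g y) μ) :
    Tendsto (fun η : ℝ => ∫ y, (‖y - x‖ ^ 2 + η) ^ (-(b / 2 : ℝ)) * g y ∂μ) (𝓝[>] 0)
      (𝓝 (∫ y, (‖y - x‖ ^ b)⁻¹ * g y ∂μ)) := by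
  have hne : ∀ᵐ y ∂μ, 0 < ‖y - x‖ :=
    (Measure.ae_ne μ x).mono fun y hy => norm_pos_iff.2 (sub_ne_zero.2 hy)
  have hmeas : ∀ η : ℝ, Measurable fun y => (‖y - x‖ ^ 2 + η) ^ (-(b / 2 : ℝ)) := by fun_prop
  refine tendsto_integral_filter_of_dominated_convergence _ ?_ ?_ hint.norm ?_
  · exact .of_forall fun η => (hmeas η).aestronglyMeasurable.mul hg
  · filter_upwards [self_mem_nhdsWithin] with η (hη : 0 < η)
    filter_upwards [hne] with y hy
    have hle : (‖y - x‖ ^ 2 + η) ^ (-(b / 2 : ℝ)) ≤ (‖y - x‖ ^ b)⁻¹ := by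
      rw [← sq_rpow_neg_half hy.le]
      exact Real.rpow_le_rpow_of_nonpos (by positivity) (le_add_of_nonneg_right hη.le)
        (neg_nonpos.2 (by positivity))
    rw [norm_mul, norm_mul]
    gcongr
    rwa [Real.norm_of_nonneg (by positivity), Real.norm_of_nonneg (by positivity)]
  · filter_upwards [hne] with y hy
    rw [← sq_rpow_neg_half hy.le]
    have hcont : ContinuousAt (fun η : ℝ => (‖y - x‖ ^ 2 + η) ^ (-(b / 2 : ℝ))) 0 :=
      ContinuousAt.rpow_const (by fun_prop) (Or.inl (by positivity))
    simpa using (hcont.tendsto.mono_left nhdsWithin_le_nhds).mul_const (g y)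

section NormedSpace

variable {E : Type*} [NormedAddCommGroup E] [NormedSpace ℝ E]

theorem integral_Ioi_fderiv_apply {f : E → ℝ} (hf : ContDiff ℝ 1 f) (hfc : HasCompactSupport f)
    (x : E) {v : E} (hv : v ≠ 0) : ∫ r in Ioi (0 : ℝ), fderiv ℝ f (x + r • v) v = -f x := by
  have hray : IsClosedEmbedding fun r : ℝ => x + r • v :=
    (Homeomorph.addLeft x).isClosedEmbedding.comp (isClosedEmbedding_smul_left hv)
  have hderiv : ∀ r : ℝ, HasDerivAt (fun r => f (x + r • v)) (fderiv ℝ f (x + r • v) v) r := by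
    intro r
    have hlin : HasDerivAt (fun r : ℝ => x + r • v) v r := by
      simpa using ((hasDerivAt_id r).smul_const v).const_add x
    exact (hf.differentiable one_ne_zero _).hasFDerivAt.comp_hasDerivAt r hlin
  have hftc := (hfc.comp_isClosedEmbedding hray).integral_Ioi_deriv_eq
    (hf.comp (by fun_prop : ContDiff ℝ 1 fun r : ℝ => x + r • v)) 0
  simpa only [Function.comp_def, (hderiv _).deriv, zero_smul, add_zero] using hftc

variable [MeasurableSpace E] [BorelSpace E] [FiniteDimensional ℝ E]

theorem integrable_inv_norm_sub_pow_mul (μ : Measure E) [μ.IsAddHaarMeasure] {a : ℕ}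
    (ha : a < finrank ℝ E) {g : E → ℝ} (hg : Continuous g) (hgc : HasCompactSupport g) (x : E) :
    Integrable (fun y => (‖y - x‖ ^ a)⁻¹ * g y) μ := by
  have hloc : LocallyIntegrable (fun z : E => (‖z‖ ^ a)⁻¹) μ := by
    refine locallyIntegrable_of_norm_le_rpow (by lia) (C := 1) (α := a) (mod_cast ha)
      (.of_forall fun z => ?_) (by fun_prop)
    rw [one_mul, Real.rpow_neg (norm_nonneg z), Real.rpow_natCast, norm_inv, norm_pow, norm_norm]
  have hint := hloc.integrable_smul_right_of_hasCompactSupport (g := fun z => g (z + x))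
    (by fun_prop) (hgc.comp_homeomorph (Homeomorph.addRight x))
  simpa only [smul_eq_mul, sub_add_cancel] using hint.comp_sub_right x

theorem integrable_inv_norm_sub_pow_mul_fderiv (μ : Measure E) [μ.IsAddHaarMeasure] {f : E → ℝ}
    (hE : finrank ℝ E ≠ 0) (hf : ContDiff ℝ 1 f) (hfc : HasCompactSupport f) (x : E) :
    Integrable (fun y => (‖y - x‖ ^ finrank ℝ E)⁻¹ * fderiv ℝ f y (y - x)) μ := by
  have hf' : Continuous (fderiv ℝ f) := hf.continuous_fderiv one_ne_zero
  refine (integrable_inv_norm_sub_pow_mul μ (a := finrank ℝ E - 1) (by lia) hf'.norm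
    (hfc.fderiv ℝ).norm x).mono' ?_ (.of_forall fun y => ?_)
  · have : Continuous fun y => fderiv ℝ f y (y - x) := hf'.clm_apply (by fun_prop)
    exact AEStronglyMeasurable.mul (by fun_prop) this.aestronglyMeasurable
  · rcases eq_or_ne ‖y - x‖ 0 with hy | hy
    · rw [hy, zero_pow hE, inv_zero, zero_mul, norm_zero]
      positivity
    · obtain ⟨k, hk⟩ := Nat.exists_eq_succ_of_ne_zero hE
      rw [norm_mul, norm_inv, norm_pow, norm_norm, hk, Nat.succ_eq_add_one,
        Nat.add_sub_cancel, pow_succ, mul_inv, mul_assoc]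
      gcongr
      rw [inv_mul_le_iff₀ (by positivity), mul_comm]
      exact (fderiv ℝ f y).le_opNorm _

theorem integral_inv_norm_sub_pow_mul_fderiv [Nontrivial E] (μ : Measure E) [μ.IsAddHaarMeasure]
    {f : E → ℝ} (hf : ContDiff ℝ 1 f) (hfc : HasCompactSupport f) (x : E) :
    ∫ y, (‖y - x‖ ^ finrank ℝ E)⁻¹ * fderiv ℝ f y (y - x) ∂μ = -(μ.toSphere.real univ * f x) := by
  have hint := (integrable_inv_norm_sub_pow_mul_fderiv μ finrank_pos.ne' hf hfc x).comp_add_left x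
  rw [← integral_add_left_eq_self _ x, integral_eq_integral_sphere_Ioi μ hint]
  have hray : ∀ θ : sphere (0 : E) 1, (∫ r in Ioi (0 : ℝ), r ^ (finrank ℝ E - 1) •
      ((‖x + r • (θ : E) - x‖ ^ finrank ℝ E)⁻¹ *
        fderiv ℝ f (x + r • (θ : E)) (x + r • (θ : E) - x))) = -f x := fun θ => by
    rw [← integral_Ioi_fderiv_apply hf hfc x (ne_zero_of_mem_unit_sphere θ)]
    refine setIntegral_congr_fun measurableSet_Ioi fun r (hr : 0 < r) => ?_
    simp only [add_sub_cancel_left, norm_smul, Real.norm_of_nonneg hr.le, norm_eq_of_mem_sphere θ,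
      mul_one, map_smul, smul_eq_mul]
    rw [← mul_pow_sub_one finrank_pos.ne' r]
    field_simp
  simp_rw [hray]
  rw [integral_const, smul_eq_mul, mul_neg]

end NormedSpace

variable {E : Type*} [NormedAddCommGroup E] [InnerProductSpace ℝ E] [FiniteDimensional ℝ E]

theorem hasGradientAt_rpow_norm_sub_sq_add (N : ℕ) {η : ℝ} (hη : 0 < η) (x y : E) :
    HasGradientAt (fun y => (‖y - x‖ ^ 2 + η) ^ (-(N / 2 : ℝ)))
      (-(N * (‖y - x‖ ^ 2 + η) ^ (-((N + 2 : ℕ) / 2 : ℝ))) • (y - x)) y := by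
  have hpos : ‖y - x‖ ^ 2 + η ≠ 0 := by positivity
  have hsq : HasFDerivAt (fun y : E => ‖y - x‖ ^ 2 + η) (2 • innerSL ℝ (y - x)) y := by
    simpa using (((hasFDerivAt_id (𝕜 := ℝ) y).sub_const x).norm_sq).add_const η
  refine ((Real.hasDerivAt_rpow_const (Or.inl hpos)).comp_hasFDerivAt y hsq).congr_fderiv ?_
  ext v
  have hexp : -(N / 2 : ℝ) - 1 = -((N + 2 : ℕ) / 2 : ℝ) := by push_cast; ring
  simp only [hexp, _root_.smul_apply, toDual_apply_apply, inner_smul_left, innerSL_apply_apply,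
    smul_eq_mul, nsmul_eq_mul, conj_trivial]
  push_cast
  ring

variable [MeasurableSpace E] [BorelSpace E]

theorem integral_rpow_norm_sub_sq_add_mul_laplacian (N : ℕ) {f : E → ℝ} (hf : ContDiff ℝ 2 f)
    (hfc : HasCompactSupport f) (x : E) {η : ℝ} (hη : 0 < η) :
    ∫ y, (‖y - x‖ ^ 2 + η) ^ (-(N / 2 : ℝ)) * Δ f y =
      N * ∫ y, (‖y - x‖ ^ 2 + η) ^ (-((N + 2 : ℕ) / 2 : ℝ)) * fderiv ℝ f y (y - x) := by
  have hu : ContDiff ℝ 1 fun y : E => (‖y - x‖ ^ 2 + η) ^ (-(N / 2 : ℝ)) :=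
    (((contDiff_id.sub contDiff_const).norm_sq ℝ).add contDiff_const).rpow_const_of_ne
      fun y => by positivity
  rw [integral_mul_laplacian hu hf hfc, ← integral_neg, ← integral_const_mul]
  refine integral_congr_ae (.of_forall fun y => ?_)
  simp only [(hasGradientAt_rpow_norm_sub_sq_add N hη x y).gradient, inner_gradient_right,
    map_smul, smul_eq_mul, conj_trivial]
  ring

theorem integral_inv_norm_sub_pow_mul_laplacian {N : ℕ} (hE : finrank ℝ E = N + 2) {f : E → ℝ}
    (hf : ContDiff ℝ 2 f) (hfc : HasCompactSupport f) (x : E) :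
    ∫ y, (‖y - x‖ ^ N)⁻¹ * Δ f y = -(N * sphereArea (N + 2) * f x) := by
  have : Nontrivial E := nontrivial_of_finrank_pos (R := ℝ) (by lia)
  have hf₁ : ContDiff ℝ 1 f := hf.of_le one_le_two
  have hΔ : Continuous (Δ f) := (contDiff_laplacian (n := 0) hf).continuous
  have hfy : Continuous fun y => fderiv ℝ f y (y - x) :=
    (hf₁.continuous_fderiv one_ne_zero).clm_apply (by fun_prop)
  have hΔc : HasCompactSupport (Δ f) := hfc.mono' (support_laplacian_subset f)
  have hlim₁ := tendsto_integral_rpow_norm_sub_sq_add_mul hΔ.aestronglyMeasurable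
    (integrable_inv_norm_sub_pow_mul volume (a := N) (by lia) hΔ hΔc x)
  have hlim₂ := tendsto_integral_rpow_norm_sub_sq_add_mul hfy.aestronglyMeasurable
    (integrable_inv_norm_sub_pow_mul_fderiv volume finrank_pos.ne' hf₁ hfc x)
  rw [hE] at hlim₂
  have hlim : Tendsto (fun η : ℝ => ∫ y, (‖y - x‖ ^ 2 + η) ^ (-(N / 2 : ℝ)) * Δ f y) (𝓝[>] 0)
      (𝓝 (N * ∫ y, (‖y - x‖ ^ (N + 2))⁻¹ * fderiv ℝ f y (y - x))) :=
    (hlim₂.const_mul (N : ℝ)).congr' <| eventually_mem_nhdsWithin.mono fun η hη =>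
      (integral_rpow_norm_sub_sq_add_mul_laplacian N hf hfc x hη).symm
  have hrad := integral_inv_norm_sub_pow_mul_fderiv volume hf₁ hfc x
  rw [toSphere_real_univ_eq_sphereArea, hE] at hrad
  rw [tendsto_nhds_unique hlim₁ hlim, hrad]
  ring

end NewtonPotential

section SphericalMean

theorem contDiff_integral_subtype {P E F : Type*} [NormedAddCommGroup P] [NormedSpace ℝ P]
    [NormedAddCommGroup E] [NormedSpace ℝ E] [FiniteDimensional ℝ E] [MeasurableSpace E]
    [BorelSpace E] [NormedAddCommGroup F] [NormedSpace ℝ F] {K : Set E} (hK : IsCompact K)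
    (μ : Measure K) [IsFiniteMeasure μ] {n : ℕ∞} {g : P → E → F} (hg : ContDiff ℝ n ↿g) :
    ContDiff ℝ n fun p => ∫ z : K, g p z ∂μ := by
  obtain ⟨R, hR, hKR⟩ := hK.isBounded.subset_closedBall_lt 0 0
  let χ : ContDiffBump (0 : E) := ⟨R, R + 1, hR, lt_add_one R⟩
  have hcut : ContDiffOn ℝ n ↿(fun p z => χ z • g p (-z)) (univ ×ˢ univ) :=
    ((χ.contDiff.comp contDiff_snd).smul
      (hg.comp (contDiff_fst.prodMk contDiff_snd.neg))).contDiffOn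
  have hconv := contDiffOn_convolution_right_with_param (μ := μ.map (↑)) (f := fun _ : E => (1 : ℝ))
    (ContinuousLinearMap.lsmul ℝ ℝ) isOpen_univ χ.hasCompactSupport.isCompact
    (fun p z _ hz => by simp [image_eq_zero_of_notMem_tsupport hz]) (locallyIntegrable_const 1) hcut
  rw [univ_prod_univ, contDiffOn_univ] at hconv
  convert hconv.comp (contDiff_id.prodMk (contDiff_const (c := (0 : E)))) using 2 with p
  simp only [Function.comp_apply, id, convolution_def,
    (MeasurableEmbedding.subtype_coe hK.measurableSet).integral_map]
  refine integral_congr_ae (.of_forall fun z => ?_)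
  have hz : χ (-z : E) = 1 := χ.one_of_mem_closedBall (by simpa using hKR z.2)
  simp [hz]

variable {E F : Type*} [NormedAddCommGroup E] [InnerProductSpace ℝ E] [FiniteDimensional ℝ E]
  [MeasurableSpace E] [BorelSpace E] [NormedAddCommGroup F] [NormedSpace ℝ F]

/-- The spherical mean `(M f)(θ, t)`: the average of `f` over the sphere of radius `t` centred at
`θ`. -/
noncomputable def sphericalMean (f : E → F) (θ : E) (t : ℝ) : F :=
  ⨍ σ : sphere (0 : E) 1, f (θ - t • (σ : E)) ∂volume.toSphere

theorem sphericalMean_eq [Nontrivial E] (f : E → F) (θ : E) (t : ℝ) :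
    sphericalMean f θ t = (sphereArea (finrank ℝ E))⁻¹ •
      ∫ σ : sphere (0 : E) 1, f (θ - t • (σ : E)) ∂volume.toSphere := by
  rw [sphericalMean, average_eq, toSphere_real_univ_eq_sphereArea]

theorem contDiff_sphericalMean {n : ℕ∞} {f : E → F} (hf : ContDiff ℝ n f) :
    ContDiff ℝ n fun p : E × ℝ => sphericalMean f p.1 p.2 := by
  simp only [sphericalMean, average_eq]
  exact contDiff_const.smul (contDiff_integral_subtype (isCompact_sphere 0 1) _
    (g := fun (p : E × ℝ) σ => f (p.1 - p.2 • σ)) (hf.comp (by fun_prop)))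

end SphericalMean

section RadialDerivative

variable {E : Type*} [NormedAddCommGroup E] [NormedSpace ℝ E] {W : E → ℝ → ℝ} {k j : ℕ}

theorem hasDerivAt_of_contDiffOn_prod (hW : ContDiffOn ℝ 1 ↿W (univ ×ˢ Ioi 0)) (θ : E) {t : ℝ}
    (ht : 0 < t) : HasDerivAt (W θ) (fderiv ℝ ↿W (θ, t) (0, 1)) t := by
  have hdiff : DifferentiableAt ℝ ↿W (θ, t) := (hW.differentiableOn one_ne_zero).differentiableAt
    ((isOpen_univ.prod isOpen_Ioi).mem_nhds (mk_mem_prod (mem_univ θ) (mem_Ioi.2 ht)))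
  exact hdiff.hasFDerivAt.comp_hasDerivAt t ((hasDerivAt_const t θ).prodMk (hasDerivAt_id t))

theorem contDiffOn_Dop (hW : ContDiffOn ℝ (k + 1 : ℕ) ↿W (univ ×ˢ Ioi 0)) :
    ContDiffOn ℝ k ↿(fun θ => Dop (W θ)) (univ ×ˢ Ioi 0) := by
  have hderiv : ContDiffOn ℝ k (fun p : E × ℝ => 1 / (2 * p.2) * fderiv ℝ ↿W p (0, 1))
      (univ ×ˢ Ioi 0) :=
    .mul (.div contDiffOn_const (by fun_prop) fun p hp => (mul_pos two_pos hp.2).ne')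
      ((hW.fderiv_of_isOpen (isOpen_univ.prod isOpen_Ioi) le_rfl).clm_apply contDiffOn_const)
  refine hderiv.congr fun p hp => ?_
  change 1 / (2 * p.2) * deriv (W p.1) p.2 = _
  rw [(hasDerivAt_of_contDiffOn_prod (hW.of_le (by simp)) p.1 hp.2).deriv]

theorem contDiffOn_iterate_Dop (hW : ContDiffOn ℝ (k + j : ℕ) ↿W (univ ×ˢ Ioi 0)) :
    ContDiffOn ℝ k ↿(fun θ => Dop^[j] (W θ)) (univ ×ˢ Ioi 0) := by
  induction j generalizing W with
  | zero => exact hW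
  | succ j ih => exact ih (contDiffOn_Dop hW)

theorem hasDerivAt_iterate_Dop (hW : ContDiffOn ℝ (j + 1 : ℕ) ↿W (univ ×ˢ Ioi 0)) (θ : E) {t : ℝ}
    (ht : 0 < t) : HasDerivAt (Dop^[j] (W θ)) (2 * t * Dop^[j + 1] (W θ) t) t := by
  have hsmooth : ContDiffOn ℝ 1 ↿(fun θ => Dop^[j] (W θ)) (univ ×ˢ Ioi 0) :=
    mod_cast contDiffOn_iterate_Dop (k := 1) (by rwa [add_comm])
  refine (hasDerivAt_of_contDiffOn_prod hsmooth θ ht).differentiableAt.hasDerivAt.congr_deriv ?_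
  rw [Function.iterate_succ_apply', Dop]
  field_simp

theorem hasDerivAt_iterate_Dop_sqrt (hW : ContDiffOn ℝ (j + 1 : ℕ) ↿W (univ ×ˢ Ioi 0)) (θ : E)
    {u : ℝ} (hu : 0 < u) :
    HasDerivAt (fun u => Dop^[j] (W θ) √u) (Dop^[j + 1] (W θ) √u) u := by
  refine ((hasDerivAt_iterate_Dop hW θ (Real.sqrt_pos.2 hu)).comp u
    (Real.hasDerivAt_sqrt hu.ne')).congr_deriv ?_
  field_simp

end RadialDerivative

section Regularization

variable {φ : ℝ → ℝ} {k : ℕ}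

theorem add_mul_pos_of_mem_Icc {c ε b : ℝ} (hε : 0 < ε) (hc : ε < c) (hb : b ∈ Icc (-1 : ℝ) 1) :
    0 < c + ε * b := by
  nlinarith [hb.1]

theorem integral_iterate_Dop_sqrt_mul {E : Type*} [NormedAddCommGroup E] [NormedSpace ℝ E]
    {W : E → ℝ → ℝ} (hW : ContDiffOn ℝ k ↿W (univ ×ˢ Ioi 0)) (hφ : ContDiff ℝ k φ)
    (hφ₁ : tsupport φ ⊆ Icc (-1) 1) (θ : E) {c ε : ℝ} (hε : 0 < ε) (hc : ε < c) :
    ∫ b, Dop^[k] (W θ) √(c + ε * b) * φ b =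
      (-1) ^ k * (ε ^ k)⁻¹ * ∫ b, W θ √(c + ε * b) * iteratedDeriv k φ b := by
  have hG : ∀ j < k, ∀ b ∈ {b | 0 < c + ε * b},
      HasDerivAt (fun b => ε ^ j * Dop^[j] (W θ) √(c + ε * b))
        (ε ^ (j + 1) * Dop^[j + 1] (W θ) √(c + ε * b)) b := fun j hj b hb => by
    have hlin : HasDerivAt (fun b => c + ε * b) ε b := by
      simpa using ((hasDerivAt_id b).const_mul ε).const_add c
    have hWj : ContDiffOn ℝ (j + 1 : ℕ) ↿W (univ ×ˢ Ioi 0) := hW.of_le (mod_cast hj)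
    refine (((hasDerivAt_iterate_Dop_sqrt hWj θ hb).comp b hlin).const_mul (ε ^ j)).congr_deriv ?_
    ring
  have hWk : ContinuousOn ↿(fun θ => Dop^[k] (W θ)) (univ ×ˢ Ioi 0) :=
    (contDiffOn_iterate_Dop (k := 0) (by rwa [zero_add])).continuousOn
  have hGk : ContinuousOn (fun b => ε ^ k * Dop^[k] (W θ) √(c + ε * b)) {b | 0 < c + ε * b} :=
    continuousOn_const.mul (hWk.comp (f := fun b => (θ, √(c + ε * b))) (by fun_prop)
      fun b hb => ⟨mem_univ _, Real.sqrt_pos.2 hb⟩)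
  have hφc : HasCompactSupport φ := isCompact_Icc.of_isClosed_subset (isClosed_tsupport φ) hφ₁
  have hibp := integral_mul_iteratedDeriv hφ hφc (U := {b | 0 < c + ε * b})
    (isOpen_lt (by fun_prop) (by fun_prop)) (fun b hb => add_mul_pos_of_mem_Icc hε hc (hφ₁ hb))
    hG hGk
  simp only [pow_zero, one_mul, Function.iterate_zero, id, mul_assoc, integral_const_mul] at hibp
  rw [hibp, mul_mul_mul_comm, ← mul_assoc, ← mul_pow]
  field_simp
  simp

variable {E : Type*} [NormedAddCommGroup E] [InnerProductSpace ℝ E] [FiniteDimensional ℝ E]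
  [MeasurableSpace E] [BorelSpace E] {g : E → ℝ}

theorem integral_mul_comp_norm_sub_sq (hE : 2 ≤ finrank ℝ E) {h : ℝ → ℝ} (θ : E)
    (hint : Integrable fun y => g y * h (‖y - θ‖ ^ 2)) :
    ∫ y, g y * h (‖y - θ‖ ^ 2) = sphereArea (finrank ℝ E) / 2 *
      ∫ u in Ioi 0, √u ^ (finrank ℝ E - 2) * sphericalMean g θ √u * h u := by
  have : Nontrivial E := nontrivial_of_finrank_pos (R := ℝ) (by lia)
  have harea := (sphereArea_pos (d := finrank ℝ E) (by lia)).ne'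
  have hint' := hint.comp_sub_left θ
  rw [← integral_sub_left_eq_self _ _ θ, integral_eq_integral_Ioi_sphere volume hint',
    ← integral_comp_rpow_Ioi_of_pos two_pos (g := fun u =>
      √u ^ (finrank ℝ E - 2) * sphericalMean g θ √u * h u), ← integral_const_mul]
  refine setIntegral_congr_fun measurableSet_Ioi fun r (hr : 0 < r) => ?_
  have hsq : r ^ (2 : ℝ) = r ^ 2 := Real.rpow_natCast r 2
  simp only [sub_sub_cancel_left, norm_neg, norm_smul, norm_eq_of_mem_sphere, mul_one,
    Real.norm_of_nonneg hr.le, integral_mul_const, sphericalMean_eq, hsq, Real.sqrt_sq hr.le,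
    smul_eq_mul]
  rw [show finrank ℝ E - 1 = finrank ℝ E - 2 + 1 by lia]
  norm_num
  field_simp
  ring

theorem integral_sqrt_pow_mul_sphericalMean_mul (hE : 2 ≤ finrank ℝ E) (hg : Continuous g)
    (hgc : HasCompactSupport g) {h : ℝ → ℝ} (hh : Continuous h)
    (hh₁ : Function.support h ⊆ Icc (-1) 1) (θ : E) {c ε : ℝ} (hε : 0 < ε) (hc : ε < c) :
    ∫ b, √(c + ε * b) ^ (finrank ℝ E - 2) * sphericalMean g θ √(c + ε * b) * h b =
      2 / sphereArea (finrank ℝ E) * ε⁻¹ * ∫ y, g y * h ((‖y - θ‖ ^ 2 - c) / ε) := by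
  have harea := (sphereArea_pos (d := finrank ℝ E) (by lia)).ne'
  have hint : Integrable fun y => g y * h ((‖y - θ‖ ^ 2 - c) / ε) :=
    Continuous.integrable_of_hasCompactSupport (by fun_prop) hgc.mul_right
  let F : ℝ → ℝ := fun u =>
    √u ^ (finrank ℝ E - 2) * sphericalMean g θ √u * h ((u - c) / ε)
  have hFsupp : Function.support F ⊆ Ioi 0 := fun u hu => by
    have hb := add_mul_pos_of_mem_Icc hε hc (hh₁ (right_ne_zero_of_mul hu))
    rwa [mul_div_cancel₀ _ hε.ne', add_sub_cancel] at hb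
  have hsubst : ∫ b, F (c + ε * b) = ε⁻¹ * ∫ u, F u := by
    rw [Measure.integral_comp_mul_left (fun u => F (c + u)), integral_add_left_eq_self F,
      abs_of_pos (inv_pos.2 hε), smul_eq_mul]
  have hIoi : ∫ u in Ioi 0, F u = ∫ u, F u := setIntegral_eq_integral_of_forall_compl_eq_zero
    fun u hu => Function.notMem_support.1 fun h => hu (hFsupp h)
  simp only [F, add_sub_cancel_left, mul_div_cancel_left₀ _ hε.ne'] at hsubst hIoi
  rw [integral_mul_comp_norm_sub_sq hE (h := fun u => h ((u - c) / ε)) θ hint, hIoi, hsubst]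
  field_simp

end Regularization

section BackprojectionKernel

variable {E : Type*} [NormedAddCommGroup E] [InnerProductSpace ℝ E] [FiniteDimensional ℝ E]
  [MeasurableSpace E] [BorelSpace E] {g : E → ℝ} {φ : ℝ → ℝ} {k m : ℕ}

/-- The kernel against which one integrates the data when their backprojection at `x` is
regularized at scale `ε` by the mollifier `φ` and its derivatives of order `k` are moved to `φ`. -/
noncomputable def backprojectionKernel (φ : ℝ → ℝ) (k : ℕ) (ε : ℝ) (x y : E) : ℝ :=
  (ε ^ (k + 1))⁻¹ * ∫ θ : sphere (0 : E) 1,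
    iteratedDeriv k φ ((‖y - θ‖ ^ 2 - ‖x - θ‖ ^ 2) / ε) ∂volume.toSphere

theorem continuous_backprojectionKernel (hφ : ContDiff ℝ k φ) (ε : ℝ) (x : E) :
    Continuous (backprojectionKernel φ k ε x) := by
  have : Continuous (iteratedDeriv k φ) := hφ.continuous_iteratedDeriv' k
  refine continuous_const.mul ?_
  simpa using continuous_parametric_integral_of_continuous (μ := (volume : Measure E).toSphere)
    (f := fun (y : E) (θ : sphere (0 : E) 1) =>
      iteratedDeriv k φ ((‖y - θ‖ ^ 2 - ‖x - θ‖ ^ 2) / ε)) (s := univ)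
    (by unfold Function.uncurry; fun_prop) isCompact_univ

theorem integral_sphere_integral_mul_iteratedDeriv (hg : Continuous g) (hgc : HasCompactSupport g)
    (hφ : ContDiff ℝ k φ) (x : E) (ε : ℝ) :
    (ε ^ (k + 1))⁻¹ * ∫ θ : sphere (0 : E) 1,
        (∫ y, g y * iteratedDeriv k φ ((‖y - θ‖ ^ 2 - ‖x - θ‖ ^ 2) / ε)) ∂volume.toSphere =
      ∫ y, g y * backprojectionKernel φ k ε x y := by
  have : Continuous (iteratedDeriv k φ) := hφ.continuous_iteratedDeriv' k
  have hcont : Continuous fun p : sphere (0 : E) 1 × E =>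
      g p.2 * iteratedDeriv k φ ((‖p.2 - p.1‖ ^ 2 - ‖x - p.1‖ ^ 2) / ε) := by fun_prop
  have hsupp : HasCompactSupport fun p : sphere (0 : E) 1 × E =>
      g p.2 * iteratedDeriv k φ ((‖p.2 - p.1‖ ^ 2 - ‖x - p.1‖ ^ 2) / ε) :=
    .intro (isCompact_univ.prod hgc) fun p hp => by
      rw [image_eq_zero_of_notMem_tsupport fun h => hp ⟨mem_univ _, h⟩, zero_mul]
  rw [integral_integral_swap (hcont.integrable_of_hasCompactSupport hsupp), ← integral_const_mul]
  refine integral_congr_ae (.of_forall fun y => ?_)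
  simp only [backprojectionKernel, integral_const_mul]
  ring

theorem backprojectionKernel_eq_of_le (hE : finrank ℝ E = 2 * m + 3)
    (hφ : ContDiff ℝ (2 * m : ℕ) φ) (hφ₁ : tsupport φ ⊆ Icc (-1) 1) {x y : E} (hy : ‖y‖ ≤ 1)
    {ε : ℝ} (hε : 0 < ε) (hεxy : ε ≤ (1 - ‖x‖) * ‖y - x‖) :
    backprojectionKernel φ (2 * m) ε x y =
      (-1) ^ m * (2 * m).factorial * sphereArea (2 * m + 2) / 2 ^ (2 * m + 1) * (∫ u, φ u) *
        (‖y - x‖ ^ (2 * m + 1))⁻¹ := by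
  have hexpand : ∀ θ : sphere (0 : E) 1, (‖y - θ‖ ^ 2 - ‖x - θ‖ ^ 2) / ε =
      (‖y‖ ^ 2 - ‖x‖ ^ 2) / ε + inner ℝ (θ : E) ((2 / ε) • (x - y)) := fun θ => by
    rw [norm_sub_sq_real, norm_sub_sq_real, inner_smul_right, inner_sub_right, real_inner_comm,
      real_inner_comm x]
    ring
  have hnorm : ‖(2 / ε) • (x - y)‖ = 2 * ‖y - x‖ / ε := by
    rw [norm_smul, Real.norm_of_nonneg (by positivity), norm_sub_rev]
    ring
  have hdiff : |‖y‖ ^ 2 - ‖x‖ ^ 2| ≤ (1 + ‖x‖) * ‖y - x‖ := by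
    rw [sq_sub_sq, abs_mul, abs_of_nonneg (by positivity)]
    gcongr
    exact abs_norm_sub_norm_le y x
  have hbv : |(‖y‖ ^ 2 - ‖x‖ ^ 2) / ε| + 1 ≤ ‖(2 / ε) • (x - y)‖ := by
    rw [hnorm, abs_div, abs_of_pos hε, div_add_one hε.ne']
    gcongr
    linarith
  simp only [backprojectionKernel, hexpand]
  rw [integral_sphere_iteratedDeriv_add_inner hE hφ hφ₁ hbv, hnorm, div_pow, mul_pow]
  field_simp

theorem abs_backprojectionKernel_le [Nontrivial E] {C : ℝ} (hC : ∀ u, ‖iteratedDeriv k φ u‖ ≤ C)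
    {ε : ℝ} (hε : 0 < ε) (x y : E) :
    |backprojectionKernel φ k ε x y| ≤ (ε ^ (k + 1))⁻¹ * (C * sphereArea (finrank ℝ E)) := by
  rw [backprojectionKernel, abs_mul, abs_of_pos (by positivity), ← toSphere_real_univ_eq_sphereArea]
  gcongr
  exact norm_integral_le_of_norm_le_const (.of_forall fun θ => hC _)

theorem exists_abs_backprojectionKernel_le (hE : finrank ℝ E = 2 * m + 3)
    (hφ : ContDiff ℝ (2 * m : ℕ) φ) (hφ₁ : tsupport φ ⊆ Icc (-1) 1) {x : E} (hx : ‖x‖ < 1) :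
    ∃ C, ∀ ε > 0, ∀ y : E, ‖y‖ ≤ 1 → y ≠ x →
      |backprojectionKernel φ (2 * m) ε x y| ≤ C * (‖y - x‖ ^ (2 * m + 1))⁻¹ := by
  have : Nontrivial E := nontrivial_of_finrank_pos (R := ℝ) (by lia)
  have hφc : HasCompactSupport φ := isCompact_Icc.of_isClosed_subset (isClosed_tsupport φ) hφ₁
  obtain ⟨C, hC⟩ := (hφc.mono' (support_iteratedDeriv_subset (2 * m))).exists_bound_of_continuous
    (hφ.continuous_iteratedDeriv' (2 * m))
  have hA := sphereArea_pos (d := finrank ℝ E) (by lia)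
  have hC₀ : 0 ≤ C := (norm_nonneg _).trans (hC 0)
  refine ⟨|(-1) ^ m * (2 * m).factorial * sphereArea (2 * m + 2) / 2 ^ (2 * m + 1) * ∫ u, φ u| +
    ((1 - ‖x‖) ^ (2 * m + 1))⁻¹ * (C * sphereArea (finrank ℝ E)), fun ε hε y hy hyx => ?_⟩
  have hxy : 0 < (1 - ‖x‖) * ‖y - x‖ := mul_pos (sub_pos.2 hx) (norm_pos_iff.2 (sub_ne_zero.2 hyx))
  have : 0 < 1 - ‖x‖ := sub_pos.2 hx
  rw [add_mul]
  rcases le_total ε ((1 - ‖x‖) * ‖y - x‖) with hle | hle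
  · rw [backprojectionKernel_eq_of_le hE hφ hφ₁ hy hε hle, abs_mul, abs_of_nonneg (by positivity :
      0 ≤ (‖y - x‖ ^ (2 * m + 1))⁻¹)]
    exact le_add_of_nonneg_right (by positivity)
  · refine (abs_backprojectionKernel_le hC hε x y).trans (le_add_of_nonneg_of_le (by positivity) ?_)
    rw [mul_right_comm, ← mul_inv, ← mul_pow]
    gcongr

theorem tendsto_integral_mul_backprojectionKernel (hE : finrank ℝ E = 2 * m + 3)
    (hφ : ContDiff ℝ (2 * m : ℕ) φ) (hφ₁ : tsupport φ ⊆ Icc (-1) 1) (hg : Continuous g)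
    (hg₁ : Function.support g ⊆ closedBall 0 1) {x : E} (hx : ‖x‖ < 1) :
    Tendsto (fun ε => ∫ y, g y * backprojectionKernel φ (2 * m) ε x y) (𝓝[>] 0)
      (𝓝 ((-1) ^ m * (2 * m).factorial * sphereArea (2 * m + 2) / 2 ^ (2 * m + 1) * (∫ u, φ u) *
        ∫ y, (‖y - x‖ ^ (2 * m + 1))⁻¹ * g y)) := by
  have : Nontrivial E := nontrivial_of_finrank_pos (R := ℝ) (by lia)
  have hgc : HasCompactSupport g := .of_support_subset_isCompact (isCompact_closedBall 0 1) hg₁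
  obtain ⟨C, hC⟩ := exists_abs_backprojectionKernel_le hE hφ hφ₁ hx
  have hne : ∀ᵐ y : E, y ≠ x := Measure.ae_ne volume x
  rw [← integral_const_mul]
  refine tendsto_integral_filter_of_dominated_convergence
    (fun y => C * ‖(‖y - x‖ ^ (2 * m + 1))⁻¹ * g y‖) ?_ ?_
    ((integrable_inv_norm_sub_pow_mul volume (by lia) hg hgc x).norm.const_mul C) ?_
  · exact .of_forall fun ε => (hg.mul (continuous_backprojectionKernel hφ ε x)).aestronglyMeasurable
  · filter_upwards [self_mem_nhdsWithin] with ε hε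
    filter_upwards [hne] with y hyx
    rcases eq_or_ne (g y) 0 with hgy | hgy
    · simp [hgy]
    · rw [norm_mul, norm_mul, Real.norm_of_nonneg (by positivity : 0 ≤ (‖y - x‖ ^ (2 * m + 1))⁻¹),
        ← mul_assoc, mul_comm]
      gcongr
      exact hC ε hε y (mem_closedBall_zero_iff.1 (hg₁ hgy)) hyx
  · filter_upwards [hne] with y hyx
    rcases eq_or_ne (g y) 0 with hgy | hgy
    · simp [hgy]
    · have hxy : 0 < (1 - ‖x‖) * ‖y - x‖ :=
        mul_pos (sub_pos.2 hx) (norm_pos_iff.2 (sub_ne_zero.2 hyx))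
      refine tendsto_const_nhds.congr' ?_
      filter_upwards [Ioc_mem_nhdsGT hxy] with ε hε
      rw [backprojectionKernel_eq_of_le hE hφ hφ₁ (mem_closedBall_zero_iff.1 (hg₁ hgy)) hε.1 hε.2]
      ring

end BackprojectionKernel

section Mollification

variable {Θ : Type*} [TopologicalSpace Θ] [CompactSpace Θ]
  [MeasurableSpace Θ] [OpensMeasurableSpace Θ] {μ : Measure Θ} [IsFiniteMeasure μ]
  {U : Θ → ℝ → ℝ} {c : Θ → ℝ} {φ : ℝ → ℝ}

theorem continuous_integral_integral_add_mul (hU : Continuous ↿U) (hc : Continuous c)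
    (hφ : Continuous φ) (hφc : HasCompactSupport φ) :
    Continuous fun ε => ∫ θ, (∫ b, U θ (c θ + ε * b) * φ b) ∂μ := by
  have hinner : Continuous fun p : ℝ × Θ => ∫ b, U p.2 (c p.2 + p.1 * b) * φ b := by
    have hcont : Continuous fun q : (ℝ × Θ) × ℝ => U q.1.2 (c q.1.2 + q.1.1 * q.2) * φ q.2 := by
      fun_prop
    rw [← continuousOn_univ]
    refine continuousOn_integral_of_compact_support hφc hcont.continuousOn fun p b _ hb => ?_
    rw [image_eq_zero_of_notMem_tsupport hb, mul_zero]
  simpa using continuous_parametric_integral_of_continuous (μ := μ) (s := univ)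
    (f := fun ε θ => ∫ b, U θ (c θ + ε * b) * φ b) hinner isCompact_univ

theorem tendsto_integral_integral_add_mul (hU : ContinuousOn ↿U (univ ×ˢ Ioi 0))
    (hc : Continuous c) (hc₀ : ∀ θ, 0 < c θ) (hφ : Continuous φ) (hφ₁ : tsupport φ ⊆ Icc (-1) 1) :
    Tendsto (fun ε => ∫ θ, (∫ b, U θ (c θ + ε * b) * φ b) ∂μ) (𝓝 0)
      (𝓝 ((∫ θ, U θ (c θ) ∂μ) * ∫ b, φ b)) := by
  obtain ⟨δ, hδ, hδc⟩ := isCompact_univ.exists_forall_le' hc.continuousOn fun θ _ => hc₀ θ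
  -- Clamping the argument of `U` from below makes the integrand continuous everywhere and does not
  -- change the integral for small `ε`.
  have hcut : Continuous ↿(fun θ u => U θ (max u (δ / 2))) :=
    hU.comp_continuous (f := fun p : Θ × ℝ => (p.1, max p.2 (δ / 2))) (by fun_prop)
      fun p => ⟨mem_univ _, lt_max_of_lt_right (half_pos hδ)⟩
  have hunclamp : ∀ ε ∈ closedBall 0 (δ / 2),
      ∫ θ, (∫ b, U θ (max (c θ + ε * b) (δ / 2)) * φ b) ∂μ =
        ∫ θ, (∫ b, U θ (c θ + ε * b) * φ b) ∂μ := fun ε hε => by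
    congr! 4 with θ b
    by_cases hb : b ∈ Icc (-1 : ℝ) 1
    · have hεb : |ε * b| ≤ δ / 2 := by
        rw [abs_mul]
        exact (mul_le_of_le_one_right (abs_nonneg ε) (abs_le.2 hb)).trans (by simpa using hε)
      rw [max_eq_left (by linarith [hδc θ (mem_univ θ), (abs_le.1 hεb).1])]
    · simp [image_eq_zero_of_notMem_tsupport fun h => hb (hφ₁ h)]
  have hφc : HasCompactSupport φ := isCompact_Icc.of_isClosed_subset (isClosed_tsupport φ) hφ₁
  have hlim := (continuous_integral_integral_add_mul (μ := μ) hcut hc hφ hφc).tendsto 0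
  rw [hunclamp 0 (mem_closedBall_self (half_pos hδ).le)] at hlim
  simp only [zero_mul, add_zero, integral_const_mul, integral_mul_const] at hlim
  exact hlim.congr' (eventually_of_mem (closedBall_mem_nhds 0 (half_pos hδ)) hunclamp)

end Mollification

section Backprojection

theorem one_sub_norm_le_norm_sub_coe_sphere {E : Type*} [SeminormedAddCommGroup E] (x : E)
    (θ : sphere (0 : E) 1) :
    1 - ‖x‖ ≤ ‖x - θ‖ := by
  simpa [norm_sub_rev x] using norm_sub_norm_le (θ : E) x

variable {E : Type*} [NormedAddCommGroup E] [InnerProductSpace ℝ E] [FiniteDimensional ℝ E]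
  [MeasurableSpace E] [BorelSpace E] {g : E → ℝ} {φ : ℝ → ℝ} {m : ℕ}

theorem contDiff_pow_mul_sphericalMean {k : ℕ} (hg : ContDiff ℝ k g) (j : ℕ) :
    ContDiff ℝ k ↿(fun θ s => s ^ j * sphericalMean g θ s) :=
  (contDiff_snd.pow j).mul (contDiff_sphericalMean (n := k) hg)

theorem integral_sphere_integral_iterate_Dop_mul (hE : finrank ℝ E = 2 * m + 3)
    (hg : ContDiff ℝ (2 * m : ℕ) g) (hgc : HasCompactSupport g) (hφ : ContDiff ℝ (2 * m : ℕ) φ)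
    (hφ₁ : tsupport φ ⊆ Icc (-1) 1) {x : E} (hx : ‖x‖ < 1) {ε : ℝ} (hε : 0 < ε)
    (hε₁ : ε < (1 - ‖x‖) ^ 2) :
    ∫ θ : sphere (0 : E) 1, (∫ b, Dop^[2 * m] (fun s => s ^ (2 * m + 1) * sphericalMean g θ s)
        √(‖x - θ‖ ^ 2 + ε * b) * φ b) ∂volume.toSphere =
      2 / sphereArea (2 * m + 3) * ∫ y, g y * backprojectionKernel φ (2 * m) ε x y := by
  have hφk : Function.support (iteratedDeriv (2 * m) φ) ⊆ Icc (-1) 1 :=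
    (support_iteratedDeriv_subset (2 * m)).trans hφ₁
  have hsphere : ∀ θ : sphere (0 : E) 1,
      ∫ b, Dop^[2 * m] (fun s => s ^ (2 * m + 1) * sphericalMean g θ s)
          √(‖x - θ‖ ^ 2 + ε * b) * φ b =
        2 / sphereArea (2 * m + 3) * ((ε ^ (2 * m + 1))⁻¹ * ∫ y,
          g y * iteratedDeriv (2 * m) φ ((‖y - θ‖ ^ 2 - ‖x - θ‖ ^ 2) / ε)) := fun θ => by
    have hc : ε < ‖x - θ‖ ^ 2 := hε₁.trans_le <|
      pow_le_pow_left₀ (sub_nonneg.2 hx.le) (one_sub_norm_le_norm_sub_coe_sphere x θ) 2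
    have hmean := integral_sqrt_pow_mul_sphericalMean_mul (by lia) hg.continuous hgc
      (hφ.continuous_iteratedDeriv' (2 * m)) hφk θ hε hc
    rw [hE, show 2 * m + 3 - 2 = 2 * m + 1 by lia] at hmean
    rw [integral_iterate_Dop_sqrt_mul (contDiff_pow_mul_sphericalMean hg (2 * m + 1)).contDiffOn
      hφ hφ₁ (θ : E) hε hc, hmean, (even_two_mul m).neg_one_pow]
    ring
  simp only [hsphere, integral_const_mul]
  rw [← integral_sphere_integral_mul_iteratedDeriv hg.continuous hgc hφ x ε]

theorem exists_contDiff_tsupport_subset_integral_eq_one (k : ℕ) :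
    ∃ φ : ℝ → ℝ, ContDiff ℝ k φ ∧ tsupport φ ⊆ Icc (-1) 1 ∧ ∫ u, φ u = 1 := by
  let χ : ContDiffBump (0 : ℝ) := ⟨1 / 2, 1, by norm_num, by norm_num⟩
  refine ⟨χ.normed volume, χ.contDiff_normed, ?_, χ.integral_normed⟩
  rw [χ.tsupport_normed_eq, Real.closedBall_eq_Icc]
  simp [χ]

theorem integral_sphere_iterate_Dop_sphericalMean (hE : finrank ℝ E = 2 * m + 3)
    (hg : ContDiff ℝ (2 * m : ℕ) g) (hg₁ : Function.support g ⊆ closedBall 0 1) {x : E}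
    (hx : ‖x‖ < 1) :
    ∫ θ : sphere (0 : E) 1, Dop^[2 * m] (fun s => s ^ (2 * m + 1) * sphericalMean g θ s) ‖x - θ‖
        ∂volume.toSphere =
      (-1) ^ m * (2 * m).factorial * sphereArea (2 * m + 2) / (4 ^ m * sphereArea (2 * m + 3)) *
        ∫ y, (‖y - x‖ ^ (2 * m + 1))⁻¹ * g y := by
  obtain ⟨φ, hφ, hφ₁, hφ_int⟩ := exists_contDiff_tsupport_subset_integral_eq_one (2 * m)
  have hgc : HasCompactSupport g := .of_support_subset_isCompact (isCompact_closedBall 0 1) hg₁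
  let W : E → ℝ → ℝ := fun θ => Dop^[2 * m] fun s => s ^ (2 * m + 1) * sphericalMean g θ s
  have hW : ContinuousOn ↿W (univ ×ˢ Ioi 0) :=
    (contDiffOn_iterate_Dop (k := 0) (j := 2 * m)
      (by simpa using (contDiff_pow_mul_sphericalMean hg (2 * m + 1)).contDiffOn)).continuousOn
  have hWsqrt : ContinuousOn ↿(fun (θ : sphere (0 : E) 1) u => W θ √u) (univ ×ˢ Ioi 0) :=
    hW.comp (f := fun p : sphere (0 : E) 1 × ℝ => ((p.1 : E), √p.2)) (by fun_prop)
      fun p hp => ⟨mem_univ _, Real.sqrt_pos.2 hp.2⟩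
  have hpos : ∀ θ : sphere (0 : E) 1, 0 < ‖x - θ‖ := fun θ =>
    (sub_pos.2 hx).trans_le (one_sub_norm_le_norm_sub_coe_sphere x θ)
  have hleft := (tendsto_integral_integral_add_mul (μ := (volume : Measure E).toSphere) hWsqrt
    (c := fun θ => ‖x - θ‖ ^ 2) (by fun_prop) (fun θ => pow_pos (hpos θ) 2) hφ.continuous
    hφ₁).mono_left (nhdsWithin_le_nhds (s := Ioi 0))
  have hright := (tendsto_integral_mul_backprojectionKernel hE hφ hφ₁ hg.continuous hg₁
    hx).const_mul (2 / sphereArea (2 * m + 3))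
  have hlim := tendsto_nhds_unique_of_eventuallyEq hleft hright <| by
    filter_upwards [Ioo_mem_nhdsGT (pow_pos (sub_pos.2 hx) 2)] with ε hε
    exact integral_sphere_integral_iterate_Dop_mul hE hg hgc hφ hφ₁ hx hε.1 hε.2
  simp only [Real.sqrt_sq (norm_nonneg _), hφ_int, mul_one, W] at hlim
  rw [hlim, pow_succ, pow_mul]
  norm_num
  field_simp

end Backprojection

section Inversion

theorem sphereArea_two_mul_add_two (m : ℕ) :
    sphereArea (2 * m + 2) = 2 * Real.pi ^ (m + 1) / m.factorial := by
  have hhalf : ((2 * m + 2 : ℕ) : ℝ) / 2 = (m + 1 : ℕ) := by push_cast; ring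
  rw [sphereArea, hhalf, Real.rpow_natCast, Nat.cast_succ, Real.Gamma_nat_eq_factorial]

theorem Gamma_add_three_halves_mul (m : ℕ) :
    Real.Gamma (m + 3 / 2) * (2 ^ (2 * m + 1) * m.factorial) =
      (2 * m + 1) * (2 * m).factorial * √Real.pi := by
  have hfact : ((2 * m + 1 : ℕ).doubleFactorial : ℝ) * (2 ^ m * m.factorial) =
      (2 * m + 1) * (2 * m).factorial := by
    have := Nat.factorial_eq_mul_doubleFactorial (2 * m)
    rw [Nat.doubleFactorial_two_mul, Nat.factorial_succ] at this
    exact_mod_cast this.symm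
  rw [show (m + 3 / 2 : ℝ) = m + 1 + 1 / 2 by ring, Real.Gamma_nat_add_one_add_half, ← hfact]
  field_simp
  ring

theorem inversion_constant_mul (m : ℕ) :
    (-1) ^ (m + 1) * Real.pi ^ (1 - (m + 3 / 2 : ℝ)) / (4 * Real.Gamma (m + 3 / 2)) *
      ((-1) ^ m * (2 * m).factorial * sphereArea (2 * m + 2) / 4 ^ m * (2 * m + 1)) = -1 := by
  have : Real.Gamma (m + 3 / 2) ≠ 0 := (Real.Gamma_pos_of_pos (by positivity)).ne'
  have hpi : Real.pi ^ (1 - (m + 3 / 2 : ℝ)) * Real.pi ^ (m + 1) = √Real.pi := by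
    rw [← Real.rpow_natCast, ← Real.rpow_add Real.pi_pos, Real.sqrt_eq_rpow]
    push_cast
    ring_nf
  have hsign : (-1 : ℝ) ^ (m + 1) * (-1) ^ m = -1 := by
    rw [← pow_add, Odd.neg_one_pow ⟨m, by ring⟩]
  calc
    _ = (-1) ^ (m + 1) * (-1) ^ m * ((2 * m + 1) * (2 * m).factorial *
          (Real.pi ^ (1 - (m + 3 / 2 : ℝ)) * Real.pi ^ (m + 1))) /
          (Real.Gamma (m + 3 / 2) * (2 ^ (2 * m + 1) * m.factorial)) := by
      rw [sphereArea_two_mul_add_two, pow_succ 2 (2 * m), pow_mul, show (2 : ℝ) ^ 2 = 4 by norm_num]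
      field_simp
      norm_num
    _ = -1 := by
      rw [hsign, hpi, ← Gamma_add_three_halves_mul, mul_div_assoc,
        div_self (by positivity), mul_one]

variable {E : Type*} [NormedAddCommGroup E] [InnerProductSpace ℝ E] [FiniteDimensional ℝ E]
  [MeasurableSpace E] [BorelSpace E]

theorem integral_sphere_iterate_Dop_sphericalMean_laplacian {m : ℕ} (hE : finrank ℝ E = 2 * m + 3)
    {f : E → ℝ} (hf : ContDiff ℝ (2 * m + 2 : ℕ) f) (hsupp : Function.support f ⊆ closedBall 0 1)
    {x : E} (hx : ‖x‖ < 1) :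
    ∫ θ : sphere (0 : E) 1,
        Dop^[2 * m] (fun s => s ^ (2 * m + 1) * sphericalMean (Δ f) (θ : E) s) ‖x - (θ : E)‖
          ∂volume.toSphere =
      -((-1) ^ m * (2 * m).factorial * sphereArea (2 * m + 2) / 4 ^ m * (2 * m + 1)) * f x := by
  have hfc : HasCompactSupport f := .of_support_subset_isCompact (isCompact_closedBall 0 1) hsupp
  have hΔ : Function.support (Δ f) ⊆ closedBall 0 1 :=
    (support_laplacian_subset f).trans (closure_minimal hsupp isClosed_closedBall)
  have hA := (sphereArea_pos (d := 2 * m + 3) (by lia)).ne'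
  rw [integral_sphere_iterate_Dop_sphericalMean hE (contDiff_laplacian hf) hΔ hx,
    integral_inv_norm_sub_pow_mul_laplacian (N := 2 * m + 1) hE (hf.of_le (mod_cast by lia)) hfc]
  push_cast
  field_simp

theorem spherical_mean_inversion_via_laplacian_general (hd : 3 ≤ finrank ℝ E)
    (hodd : Odd (finrank ℝ E)) {f : E → ℝ} (hf : ContDiff ℝ (finrank ℝ E - 1 : ℕ) f)
    (hsupp : Function.support f ⊆ closedBall 0 1) {x : E} (hx : x ∈ ball 0 1) :
    f x = (-1) ^ ((finrank ℝ E - 1) / 2) * Real.pi ^ (1 - (finrank ℝ E : ℝ) / 2) /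
        (4 * Real.Gamma ((finrank ℝ E : ℝ) / 2)) *
      ∫ θ : sphere (0 : E) 1,
        Dop^[finrank ℝ E - 3] (fun s => s ^ (finrank ℝ E - 2) * sphericalMean (Δ f) (θ : E) s)
          ‖x - (θ : E)‖ ∂volume.toSphere := by
  obtain ⟨m, hE⟩ : ∃ m, finrank ℝ E = 2 * m + 3 := by
    obtain ⟨k, hk⟩ := hodd
    exact ⟨k - 1, by lia⟩
  have hhalf : ((2 * m + 3 : ℕ) : ℝ) / 2 = m + 3 / 2 := by push_cast; ring
  rw [hE, show 2 * m + 3 - 1 = 2 * m + 2 by lia] at hf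
  rw [hE, show 2 * m + 3 - 3 = 2 * m by lia, show 2 * m + 3 - 2 = 2 * m + 1 by lia,
    show (2 * m + 3 - 1) / 2 = m + 1 by lia, hhalf,
    integral_sphere_iterate_Dop_sphericalMean_laplacian hE hf hsupp (mem_ball_zero_iff.1 hx)]
  linear_combination f x * inversion_constant_mul m

end Inversion

theorem lap_eq_laplacian {n : ℕ} (f : EuclideanSpace ℝ (Fin n) → ℝ) : lap f = Δ f := by
  rw [laplacian_eq_iteratedFDeriv_orthonormalBasis f (EuclideanSpace.basisFun (Fin n) ℝ)]
  ext x
  simp [lap]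

/-- inversion of the spherical mean transform via the spherical means
`ψ_θ = (M(Δf))(θ,·)` of the Laplacian of `f`, for `n ≥ 3` odd. -/
theorem spherical_mean_inversion_via_laplacian
    (n : ℕ) (hn3 : 3 ≤ n) (hodd : Odd n)
    (f : EuclideanSpace ℝ (Fin n) → ℝ)
    (hf : ContDiff ℝ (⊤ : ℕ∞) f) (hfc : HasCompactSupport f)
    (hsupp : tsupport f ⊆ ball (0 : EuclideanSpace ℝ (Fin n)) 1)
    -- `ψ_θ(t) = (M(Δf))(θ,t)`, the spherical mean of the Laplacian of `f`
    (ψ : EuclideanSpace ℝ (Fin n) → ℝ → ℝ)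
    (hψ : ∀ θ : EuclideanSpace ℝ (Fin n), ∀ t : ℝ,
      ψ θ t = (1 / (2 * Real.pi ^ ((n : ℝ) / 2) / Real.Gamma ((n : ℝ) / 2))) *
        ∫ σ : sphere (0 : EuclideanSpace ℝ (Fin n)) 1,
          lap f (θ - t • (σ : EuclideanSpace ℝ (Fin n))) ∂(sphereMeasure n))
    (x : EuclideanSpace ℝ (Fin n)) (hx : x ∈ ball (0 : EuclideanSpace ℝ (Fin n)) 1) :
    f x = ((-1 : ℝ) ^ ((n - 1) / 2) * Real.pi ^ (1 - (n : ℝ) / 2) /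
            (4 * Real.Gamma ((n : ℝ) / 2))) *
      ∫ θ : sphere (0 : EuclideanSpace ℝ (Fin n)) 1,
        Dop^[n - 3] (fun s => s ^ (n - 2) * ψ (θ : EuclideanSpace ℝ (Fin n)) s)
          ‖x - (θ : EuclideanSpace ℝ (Fin n))‖ ∂(sphereMeasure n) := by
  have : Nontrivial (EuclideanSpace ℝ (Fin n)) :=
    nontrivial_of_finrank_pos (R := ℝ) (by rw [finrank_euclideanSpace_fin]; lia)
  have hψ' : ψ = sphericalMean (Δ f) := by
    ext θ t
    rw [hψ, sphericalMean_eq, finrank_euclideanSpace_fin, lap_eq_laplacian, one_div]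
    rfl
  simpa only [finrank_euclideanSpace_fin, hψ', sphereMeasure] using
    spherical_mean_inversion_via_laplacian_general (E := EuclideanSpace ℝ (Fin n)) (f := f)
      (by rwa [finrank_euclideanSpace_fin]) (by rwa [finrank_euclideanSpace_fin])
      (contDiff_infty.1 hf _) ((subset_tsupport f).trans (hsupp.trans ball_subset_closedBall)) hx
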